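/- arXiv:2401.12968 — 4 statements merged into one kernel-verified Lean document; each statement's English description precedes it below -/
import Mathlib

section
/- Let S ≥ 1/2 be a half-integer and G = (V,E,w) a finite undirected graph with nonnegative edge weights, N = |V|. Then SDP_S(G) := max over unit vectors y_1,...,y_N ∈ ℝ^N of (1/2) Σ_{{i,j}∈E} w_ij (1 − ((S+1)/S) y_i·y_j) satisfies SDP_S(G) ≥ QMaxCut_S(G). -/
open Matrix MeasureTheory Filter
open scoped BigOperators RealInnerProductSpace Kronecker

noncomputable section

/-- The spin value `S = n/2` for a half-integer spin encoded by `n : ℕ` (`n ≥ 1` means `S ≥ 1/2`). -/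
def spinVal (n : ℕ) : ℝ := (n : ℝ) / 2

/-- The raising operator `S⁺` on `ℂ^(n+1)` in the basis `|m⟩`, `m = k − n/2`, `k = 0, …, n`:
`S⁺|m⟩ = √(S(S+1) − m(m+1)) |m+1⟩`. -/
def spinP (n : ℕ) : Matrix (Fin (n+1)) (Fin (n+1)) ℂ :=
  fun j k => if (j : ℕ) = (k : ℕ) + 1
    then (Real.sqrt (spinVal n * (spinVal n + 1)
      - ((k : ℝ) - spinVal n) * (((k : ℝ) - spinVal n) + 1)) : ℂ)
    else 0

/-- The standard spin-`S` matrices `Ŝ¹, Ŝ², Ŝ³` on `ℂ^(n+1)`, where `S = n/2`: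
`Ŝ¹ = (S⁺ + S⁻)/2`, `Ŝ² = (S⁺ − S⁻)/(2i)`, `Ŝ³|m⟩ = m|m⟩`, with `S⁻ = (S⁺)ᴴ`. -/
def spinMat (n : ℕ) : Fin 3 → Matrix (Fin (n+1)) (Fin (n+1)) ℂ :=
  fun α =>
    if α = 0 then (1/2 : ℂ) • (spinP n + (spinP n)ᴴ)
    else if α = 1 then (1/(2*Complex.I) : ℂ) • (spinP n - (spinP n)ᴴ)
    else Matrix.diagonal (fun k => (((k : ℝ) - spinVal n : ℝ) : ℂ))

/-- The operator `A` acting on tensor factor `i` of `(ℂ^(n+1))^{⊗V}` and as the identity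
elsewhere, realized as a matrix indexed by configurations `V → Fin (n+1)`. -/
def siteOp {V : Type*} [Fintype V] [DecidableEq V] (n : ℕ) (i : V)
    (A : Matrix (Fin (n+1)) (Fin (n+1)) ℂ) :
    Matrix (V → Fin (n+1)) (V → Fin (n+1)) ℂ :=
  fun x y => if ∀ j, j ≠ i → x j = y j then A (x i) (y i) else 0

/-- The Heisenberg coupling `Σ_{α=1}^3 Ŝ^α_i Ŝ^α_j` between sites `i` and `j`. -/
def heis {V : Type*} [Fintype V] [DecidableEq V] (n : ℕ) (i j : V) :
    Matrix (V → Fin (n+1)) (V → Fin (n+1)) ℂ :=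
  ∑ α : Fin 3, siteOp n i (spinMat n α) * siteOp n j (spinMat n α)

/-- The largest eigenvalue of a complex matrix (as a real number). -/
def maxEig {m : Type*} [Fintype m] (A : Matrix m m ℂ) : ℝ :=
  sSup {r : ℝ | ∃ v : m → ℂ, v ≠ 0 ∧ A.mulVec v = (r : ℂ) • v}

/-- The smallest eigenvalue of a complex matrix (as a real number). -/
def minEig {m : Type*} [Fintype m] (A : Matrix m m ℂ) : ℝ :=
  sInf {r : ℝ | ∃ v : m → ℂ, v ≠ 0 ∧ A.mulVec v = (r : ℂ) • v}

/-- The spin-`S` Quantum Max-Cut Hamiltonian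
`Ĥ_QMC = (1/2) Σ_{{i,j}∈E} w_ij (𝟙 − (1/S²) Σ_α Ŝ^α_i Ŝ^α_j)`, written as a sum over
ordered pairs of vertices (each unordered edge counted twice, whence the factor `1/4`). -/
def hQMC {V : Type*} [Fintype V] [DecidableEq V] (n : ℕ) (w : V → V → ℝ) :
    Matrix (V → Fin (n+1)) (V → Fin (n+1)) ℂ :=
  (1/4 : ℂ) • ∑ i, ∑ j, (w i j : ℂ) •
    ((1 : Matrix (V → Fin (n+1)) (V → Fin (n+1)) ℂ)
      - ((1/(spinVal n)^2 : ℝ) : ℂ) • heis n i j)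

/-- The value `QMaxCut_S(G)`: the largest eigenvalue of `Ĥ_QMC`. -/
def qMaxCut {V : Type*} [Fintype V] [DecidableEq V] (n : ℕ) (w : V → V → ℝ) : ℝ :=
  maxEig (hQMC n w)

/-- The objective of the spin-`S` SDP: `(1/2) Σ_{{i,j}∈E} w_ij (1 − ((S+1)/S) y_i·y_j)` for
unit vectors `y_i ∈ ℝ^N`, `N = |V|`, written as a sum over ordered pairs of vertices. -/
def sdpObj {V : Type*} [Fintype V] (n : ℕ) (w : V → V → ℝ)
    (y : V → EuclideanSpace ℝ V) : ℝ :=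
  (1/4) * ∑ i, ∑ j, w i j * (1 - ((spinVal n + 1) / spinVal n) * ⟪y i, y j⟫)

/-- The value `SDP_S(G)`: the maximum of the SDP objective over unit vectors `y_i ∈ ℝ^N`. -/
def sdpVal {V : Type*} [Fintype V] (n : ℕ) (w : V → V → ℝ) : ℝ :=
  sSup {x : ℝ | ∃ y : V → EuclideanSpace ℝ V, (∀ i, ‖y i‖ = 1) ∧ x = sdpObj n w y}

section aux
variable {V : Type*} [Fintype V] [DecidableEq V]

lemma siteOp_mul_apply (n : ℕ) (i : V) (A : Matrix (Fin (n+1)) (Fin (n+1)) ℂ)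
    (M : Matrix (V → Fin (n+1)) (V → Fin (n+1)) ℂ) (x z : V → Fin (n+1)) :
    (siteOp n i A * M) x z = ∑ k, A (x i) k * M (Function.update x i k) z := by
  rw [Matrix.mul_apply]
  symm
  apply Finset.sum_of_injOn (fun k => Function.update x i k)
  · intro a _ b _ h
    exact Function.update_injective x i h
  · intro a _; simp
  · intro y _ hy
    have : ¬ ∀ j, j ≠ i → x j = y j := by
      intro h
      apply hy
      refine ⟨y i, by simp, ?_⟩
      funext j
      by_cases hj : j = i
      · subst hj; simp
      · simp [hj, h j hj]
    simp [siteOp, this]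
  · intro k _
    have : ∀ j, j ≠ i → x j = Function.update x i k j := by
      intro j hj; simp [hj]
    simp only [siteOp]
    rw [if_pos this]
    simp

lemma siteOp_mul (n : ℕ) (i : V) (A B : Matrix (Fin (n+1)) (Fin (n+1)) ℂ) :
    siteOp n i A * siteOp n i B = siteOp n i (A * B) := by
  ext x z
  rw [siteOp_mul_apply]
  by_cases h : ∀ j, j ≠ i → x j = z j
  · simp only [siteOp, if_pos h, Matrix.mul_apply]
    refine Finset.sum_congr rfl fun k _ => ?_
    rw [if_pos]
    · simp
    · intro j hj; simp [hj, h j hj]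
  · simp only [siteOp, if_neg h]
    refine Finset.sum_eq_zero fun k _ => ?_
    rw [if_neg, mul_zero]
    intro h'
    apply h
    intro j hj
    have := h' j hj
    simpa [hj] using this

lemma siteOp_conjTranspose (n : ℕ) (i : V) (A : Matrix (Fin (n+1)) (Fin (n+1)) ℂ) :
    (siteOp n i A)ᴴ = siteOp n i Aᴴ := by
  ext x z
  by_cases h : ∀ j, j ≠ i → x j = z j
  · have h' : ∀ j, j ≠ i → z j = x j := fun j hj => (h j hj).symm
    simp only [siteOp, Matrix.conjTranspose_apply, if_pos h, if_pos h']
  · have h' : ¬ ∀ j, j ≠ i → z j = x j := fun h' => h fun j hj => (h' j hj).symm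
    simp only [siteOp, Matrix.conjTranspose_apply, if_neg h, if_neg h', star_zero]

lemma siteOp_add (n : ℕ) (i : V) (A B : Matrix (Fin (n+1)) (Fin (n+1)) ℂ) :
    siteOp n i (A + B) = siteOp n i A + siteOp n i B := by
  ext x z
  simp only [siteOp, Matrix.add_apply]
  split_ifs <;> simp

lemma siteOp_smul_one (n : ℕ) (i : V) (c : ℂ) :
    siteOp n i (c • 1) = c • 1 := by
  ext x z
  simp only [siteOp, Matrix.smul_apply, Matrix.one_apply]
  by_cases h : x = z
  · subst h; simp
  · rw [if_neg h]
    split_ifs with h1 h2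
    · exfalso; apply h; funext j
      by_cases hj : j = i
      · subst hj; exact h2
      · exact h1 j hj
    · simp
    · simp

lemma spinMat_herm (n : ℕ) (α : Fin 3) : (spinMat n α)ᴴ = spinMat n α := by
  fin_cases α
  · simp [spinMat, Matrix.conjTranspose_smul, add_comm]
  · simp only [spinMat]
    ext a b
    simp
    ring
  · simp only [spinMat]
    ext a b
    simp [Matrix.diagonal_apply]
    by_cases h : a = b
    · subst h; simp
    · simp [h, Ne.symm h]

lemma spinP_mul_self (n : ℕ) : (spinP n)ᴴ * spinP n =
    Matrix.diagonal (fun k : Fin (n+1) => ((spinVal n * (spinVal n + 1)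
      - ((k : ℝ) - spinVal n) * (((k : ℝ) - spinVal n) + 1) : ℝ) : ℂ)) := by
  ext a b
  simp only [Matrix.mul_apply, Matrix.conjTranspose_apply, spinP, Matrix.diagonal_apply]
  by_cases h : a = b
  · subst h
    rw [if_pos rfl]
    have hle : (a : ℝ) ≤ n := by exact_mod_cast Nat.lt_succ_iff.mp a.2
    have ha0 : (0:ℝ) ≤ (a:ℝ) := by positivity
    by_cases ha : (a : ℕ) < n
    · rw [Finset.sum_eq_single (⟨a + 1, by omega⟩ : Fin (n+1))]
      · simp only [if_true]
        rw [Complex.star_def, Complex.conj_ofReal, ← Complex.ofReal_mul, Real.mul_self_sqrt]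
        simp only [spinVal]
        nlinarith
      · intro c _ hc
        have : ¬ ((c : ℕ) = a + 1) := fun h => hc (Fin.ext h)
        simp [this]
      · simp
    · have han : (a : ℕ) = n := by omega
      rw [Finset.sum_eq_zero]
      · rw [han]; symm
        rw [Complex.ofReal_eq_zero]
        simp only [spinVal]; ring
      · intro c _
        have : ¬ ((c : ℕ) = a + 1) := by omega
        simp [this]
  · rw [if_neg h]
    refine Finset.sum_eq_zero fun c _ => ?_
    by_cases h1 : (c : ℕ) = a + 1
    · have : ¬ ((c : ℕ) = b + 1) := fun h2 => h (Fin.ext (by omega))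
      simp [this]
    · simp [h1]

lemma spinP_self_mul (n : ℕ) : spinP n * (spinP n)ᴴ =
    Matrix.diagonal (fun k : Fin (n+1) => ((spinVal n * (spinVal n + 1)
      - ((k : ℝ) - spinVal n) * (((k : ℝ) - spinVal n) - 1) : ℝ) : ℂ)) := by
  ext a b
  simp only [Matrix.mul_apply, Matrix.conjTranspose_apply, spinP, Matrix.diagonal_apply]
  by_cases h : a = b
  · subst h
    rw [if_pos rfl]
    have hle : (a : ℝ) ≤ n := by exact_mod_cast Nat.lt_succ_iff.mp a.2
    by_cases ha : 0 < (a : ℕ)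
    · have ha1 : (1:ℝ) ≤ (a:ℝ) := by exact_mod_cast ha
      rw [Finset.sum_eq_single (⟨a - 1, by omega⟩ : Fin (n+1))]
      · have e : (a : ℕ) = a - 1 + 1 := by omega
        have e' : (((a - 1 : ℕ)) : ℝ) = (a : ℝ) - 1 := by push_cast [Nat.cast_sub ha]; ring
        simp only [if_pos e, e']
        rw [Complex.star_def, Complex.conj_ofReal, ← Complex.ofReal_mul, Real.mul_self_sqrt]
        · congr 1; ring
        simp only [spinVal]
        nlinarith
      · intro c _ hc
        have : ¬ ((a : ℕ) = c + 1) := fun h => hc (Fin.ext (by simp; omega))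
        simp [this]
      · simp
    · have han : (a : ℕ) = 0 := by omega
      rw [Finset.sum_eq_zero]
      · rw [han]; symm
        rw [Complex.ofReal_eq_zero]
        simp only [spinVal]; push_cast; ring
      · intro c _
        have : ¬ ((a : ℕ) = c + 1) := by omega
        simp [this]
  · rw [if_neg h]
    refine Finset.sum_eq_zero fun c _ => ?_
    by_cases h1 : (a : ℕ) = c + 1
    · have : ¬ ((b : ℕ) = c + 1) := fun h2 => h (Fin.ext (by omega))
      simp [this]
    · simp [h1]

lemma casimir (n : ℕ) : ∑ α : Fin 3, spinMat n α * spinMat n α =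
    ((spinVal n * (spinVal n + 1) : ℝ) : ℂ) • (1 : Matrix (Fin (n+1)) (Fin (n+1)) ℂ) := by
  have h0 : spinMat n 0 * spinMat n 0 + spinMat n 1 * spinMat n 1 =
      (1/2 : ℂ) • ((spinP n)ᴴ * spinP n + spinP n * (spinP n)ᴴ) := by
    have hI : (1/(2*Complex.I) : ℂ) * (1/(2*Complex.I) : ℂ) = -(1/4) := by
      field_simp
      simp
      norm_num
    simp only [spinMat, if_true, one_ne_zero, if_false, smul_mul_smul_comm, hI]
    simp only [mul_add, add_mul, mul_sub, sub_mul]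
    module
  rw [Fin.sum_univ_three, h0, spinP_mul_self, spinP_self_mul]
  have h2 : spinMat n 2 = Matrix.diagonal (fun k : Fin (n+1) => (((k : ℝ) - spinVal n : ℝ) : ℂ)) := by
    simp [spinMat]
  rw [h2]
  ext a b
  by_cases h : a = b
  · subst h
    simp
    ring
  · simp [h, Matrix.one_apply]

lemma heis_self (n : ℕ) (i : V) :
    heis n i i = ((spinVal n * (spinVal n + 1) : ℝ) : ℂ) • 1 := by
  rw [← siteOp_smul_one n i, ← casimir]
  simp only [heis, siteOp_mul, Fin.sum_univ_three, siteOp_add]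

def gramG (n : ℕ) (v : (V → Fin (n+1)) → ℂ) : Matrix V V ℝ :=
  fun i j => (star v ⬝ᵥ (heis n i j *ᵥ v)).re

def gramB (n : ℕ) (v : (V → Fin (n+1)) → ℂ) : Matrix (Fin 3 × (V → Fin (n+1))) V ℂ :=
  fun p i => (siteOp n i (spinMat n p.1) *ᵥ v) p.2

lemma gramG_psd (n : ℕ) (v : (V → Fin (n+1)) → ℂ) : (gramG n v).PosSemidef := by
  have : gramG n v = ((gramB n v).map Complex.re)ᴴ * ((gramB n v).map Complex.re)
      + ((gramB n v).map Complex.im)ᴴ * ((gramB n v).map Complex.im) := by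
    ext i j
    have h : star v ⬝ᵥ (heis n i j *ᵥ v) = ∑ p, star (gramB n v p i) * gramB n v p j := by
      rw [Fintype.sum_prod_type, heis, Matrix.sum_mulVec, dotProduct_sum]
      refine Finset.sum_congr rfl fun α _ => ?_
      rw [← Matrix.mulVec_mulVec, Matrix.dotProduct_mulVec]
      have : star v ᵥ* siteOp n i (spinMat n α) = star (siteOp n i (spinMat n α) *ᵥ v) := by
        rw [Matrix.star_mulVec, siteOp_conjTranspose, spinMat_herm]
      rw [this]
      rfl
    simp only [gramG, h, Complex.re_sum, Matrix.add_apply, Matrix.mul_apply,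
      Matrix.conjTranspose_apply, Matrix.map_apply, ← Finset.sum_add_distrib]
    refine Finset.sum_congr rfl fun p _ => ?_
    simp
  rw [this]
  exact (Matrix.posSemidef_conjTranspose_mul_self _).add
    (Matrix.posSemidef_conjTranspose_mul_self _)

lemma normsq_eq (m : Type*) [Fintype m] (v : m → ℂ) :
    star v ⬝ᵥ v = ((∑ x, Complex.normSq (v x) : ℝ) : ℂ) := by
  simp [dotProduct, Complex.normSq_eq_conj_mul_self]

lemma gramG_diag (n : ℕ) (v : (V → Fin (n+1)) → ℂ) (i : V) :
    gramG n v i i = spinVal n * (spinVal n + 1) * ∑ x, Complex.normSq (v x) := by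
  rw [gramG, heis_self, Matrix.smul_mulVec, Matrix.one_mulVec, dotProduct_smul, normsq_eq,
    smul_eq_mul, ← Complex.ofReal_mul, Complex.ofReal_re]

lemma eig_eq (n : ℕ) (w : V → V → ℝ) (v : (V → Fin (n+1)) → ℂ) (r : ℝ)
    (h : (hQMC n w).mulVec v = (r : ℂ) • v) :
    r * ∑ x, Complex.normSq (v x) = (1/4) * ∑ i, ∑ j, w i j *
      ((∑ x, Complex.normSq (v x)) - 1/(spinVal n)^2 * gramG n v i j) := by
  have h1 := congrArg (fun u => (star v ⬝ᵥ u).re) h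
  simp only [dotProduct_smul, normsq_eq, smul_eq_mul, ← Complex.ofReal_mul,
    Complex.ofReal_re] at h1
  rw [← h1]
  have h4 : (1/4 : ℂ) = ((1/4 : ℝ) : ℂ) := by norm_num
  simp only [hQMC, Matrix.smul_mulVec, Matrix.sum_mulVec, dotProduct_smul, dotProduct_sum,
    Matrix.sub_mulVec, Matrix.one_mulVec, dotProduct_sub, smul_eq_mul, h4,
    Complex.re_ofReal_mul, Complex.re_sum, Complex.sub_re, normsq_eq, Complex.ofReal_re, gramG]

lemma sdp_bdd (n : ℕ) (w : V → V → ℝ) :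
    BddAbove {x : ℝ | ∃ y : V → EuclideanSpace ℝ V, (∀ i, ‖y i‖ = 1) ∧ x = sdpObj n w y} := by
  refine ⟨(1/4) * ∑ i, ∑ j, |w i j| * (1 + |(spinVal n + 1) / spinVal n|), ?_⟩
  rintro x ⟨y, hy, rfl⟩
  unfold sdpObj
  refine mul_le_mul_of_nonneg_left (Finset.sum_le_sum fun i _ => Finset.sum_le_sum fun j _ => ?_) (by norm_num)
  refine (le_abs_self _).trans ?_
  rw [abs_mul]
  gcongr
  refine (abs_sub _ _).trans ?_
  rw [abs_one, abs_mul]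
  have := abs_real_inner_le_norm (y i) (y j)
  rw [hy, hy, one_mul] at this
  gcongr
  exact mul_le_of_le_one_right (abs_nonneg _) this

end aux

section fac
open scoped MatrixOrder

lemma psd_factor {V : Type*} [Fintype V] [DecidableEq V] {A : Matrix V V ℝ} (h : A.PosSemidef) :
    ∃ B : Matrix V V ℝ, A = Bᴴ * B :=
  CStarAlgebra.nonneg_iff_eq_star_mul_self.mp h.nonneg

end fac

/-- For every half-integer `S ≥ 1/2` and every finite undirected graph `G`
with nonnegative edge weights, the spin-`S` SDP is a relaxation of `QMaxCut_S`:
`SDP_S(G) ≥ QMaxCut_S(G)`. -/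
theorem sdp_is_relaxation (n : ℕ) (hn : 1 ≤ n) {V : Type*} [Fintype V] [DecidableEq V]
    (w : V → V → ℝ) (hsymm : ∀ i j, w i j = w j i) (hnn : ∀ i j, 0 ≤ w i j)
    (hloop : ∀ i, w i i = 0) :
    qMaxCut n w ≤ sdpVal n w := by
  have hbdd := sdp_bdd n w
  have hS : 0 < spinVal n := by
    have : (0:ℝ) < n := by exact_mod_cast hn
    unfold spinVal; positivity
  unfold qMaxCut maxEig
  apply Real.sSup_le
  · rintro r ⟨v, hv, hr⟩
    set q := ∑ x, Complex.normSq (v x) with hq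
    have hqpos : 0 < q := by
      obtain ⟨x, hx⟩ := Function.ne_iff.mp hv
      exact Finset.sum_pos' (fun _ _ => Complex.normSq_nonneg _)
        ⟨x, Finset.mem_univ _, Complex.normSq_pos.mpr hx⟩
    have hc : 0 < spinVal n * (spinVal n + 1) * q := by positivity
    have hE := eig_eq n w v r hr
    have hpsd : ((spinVal n * (spinVal n + 1) * q)⁻¹ • gramG n v).PosSemidef :=
      (gramG_psd n v).smul (by positivity)
    obtain ⟨B, hB⟩ := psd_factor hpsd
    have hin : ∀ i j, ⟪(WithLp.toLp 2 (fun k => B k i) : EuclideanSpace ℝ V),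
        WithLp.toLp 2 (fun k => B k j)⟫ = (spinVal n * (spinVal n + 1) * q)⁻¹ * gramG n v i j := by
      intro i j
      have := congrFun (congrFun hB i) j
      rw [Matrix.smul_apply, smul_eq_mul] at this
      rw [this, Matrix.mul_apply]
      simp [PiLp.inner_apply, mul_comm]
    refine le_csSup hbdd ⟨fun i => WithLp.toLp 2 (fun k => B k i), ?_, ?_⟩
    · intro i
      have h := hin i i
      rw [gramG_diag, ← hq, inv_mul_cancel₀ hc.ne', real_inner_self_eq_norm_sq] at h
      nlinarith [norm_nonneg (WithLp.toLp 2 (fun k => B k i) : EuclideanSpace ℝ V)]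
    · have : r = (r * q) / q := by field_simp
      rw [this, hE, ← hq]
      simp only [sdpObj, hin]
      rw [mul_div_assoc, Finset.sum_div]
      congr 1
      refine Finset.sum_congr rfl fun i _ => ?_
      rw [Finset.sum_div]
      refine Finset.sum_congr rfl fun j _ => ?_
      field_simp
  · refine le_csSup_of_le hbdd ⟨fun i => EuclideanSpace.single i (1:ℝ), ?_, rfl⟩ ?_
    · intro i; simp
    · unfold sdpObj
      refine mul_nonneg (by norm_num) (Finset.sum_nonneg fun i _ => Finset.sum_nonneg fun j _ => ?_)
      by_cases h : i = j
      · subst h; simp [hloop]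
      · simp [EuclideanSpace.inner_single_left, h, hnn]

end
end

section
/- Let S ≥ 1/2 be a half-integer and G = (V,E,w) a finite undirected graph with nonnegative edge weights. Then (S/(S+1))² · QMaxCut_S(G) ≤ Prod(G) ≤ QMaxCut_S(G), where Prod(G) = max over assignments of unit vectors Ω_i ∈ S² ⊂ ℝ³ to the vertices of (1/2) Σ_{{i,j}∈E} w_ij (1 − Ω_i·Ω_j). -/
open Matrix MeasureTheory Filter
open scoped BigOperators RealInnerProductSpace Kronecker

noncomputable section

/-- The classical cut energy `(1/2) Σ_{{i,j}∈E} w_ij (1 − u_i·u_j)`, written as a sum over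
ordered pairs of vertices (each unordered edge counted twice, whence the factor `1/4`). -/
def cutEnergy {V : Type*} [Fintype V] (w : V → V → ℝ)
    (u : V → EuclideanSpace ℝ (Fin 3)) : ℝ :=
  (1/4) * ∑ i, ∑ j, w i j * (1 - ⟪u i, u j⟫)

/-- The product-state value `Prod(G)`: the maximum of the cut energy over assignments of
unit vectors in `ℝ³` to the vertices. -/
def prodVal {V : Type*} [Fintype V] (w : V → V → ℝ) : ℝ :=
  sSup {x : ℝ | ∃ Ω : V → EuclideanSpace ℝ (Fin 3), (∀ i, ‖Ω i‖ = 1) ∧ x = cutEnergy w Ω}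

/-- The classical Heisenberg energy `(1/2) Σ_{{i,j}∈E} w_ij Ω_i·Ω_j`. -/
def chaEnergy {V : Type*} [Fintype V] (w : V → V → ℝ)
    (Ω : V → EuclideanSpace ℝ (Fin 3)) : ℝ :=
  (1/4) * ∑ i, ∑ j, w i j * ⟪Ω i, Ω j⟫

/-- The value `CHA(G)` of the classical Heisenberg antiferromagnet. -/
def chaVal {V : Type*} [Fintype V] (w : V → V → ℝ) : ℝ :=
  sInf {x : ℝ | ∃ Ω : V → EuclideanSpace ℝ (Fin 3), (∀ i, ‖Ω i‖ = 1) ∧ x = chaEnergy w Ω}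


section
set_option linter.unusedSectionVars false
variable {V : Type*} [Fintype V] [DecidableEq V]

/-- tensor product of matrices -/
def tens {n : ℕ} (N : V → Matrix (Fin (n+1)) (Fin (n+1)) ℂ) :
    Matrix (V → Fin (n+1)) (V → Fin (n+1)) ℂ := fun x y => ∏ k, N k (x k) (y k)

lemma tens_one {n : ℕ} : tens (fun _ : V => (1 : Matrix (Fin (n+1)) (Fin (n+1)) ℂ)) = 1 := by
  ext x y
  simp only [tens, Matrix.one_apply]
  rw [Finset.prod_ite_zero]
  simp [funext_iff]

lemma tens_mul {n : ℕ} (N N' : V → Matrix (Fin (n+1)) (Fin (n+1)) ℂ) :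
    tens N * tens N' = tens (fun k => N k * N' k) := by
  ext x y
  simp only [tens, Matrix.mul_apply, Fintype.prod_sum, Finset.prod_mul_distrib]

lemma siteOp_eq (n : ℕ) (i : V) (A : Matrix (Fin (n+1)) (Fin (n+1)) ℂ) :
    siteOp n i A = tens (fun k => if k = i then A else 1) := by
  ext x y
  simp only [siteOp, tens]
  rw [← Finset.mul_prod_erase Finset.univ _ (Finset.mem_univ i)]
  have : ∏ k ∈ Finset.univ.erase i, (if k = i then A else 1) (x k) (y k)
      = ∏ k ∈ Finset.univ.erase i, if x k = y k then (1:ℂ) else 0 := by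
    refine Finset.prod_congr rfl fun k hk => ?_
    rw [if_neg (Finset.ne_of_mem_erase hk), Matrix.one_apply]
  rw [this, Finset.prod_ite_zero]
  simp

/-- the family with `A` at `i` and `j` -/
def pairFam {n : ℕ} (i j : V) (A : Matrix (Fin (n+1)) (Fin (n+1)) ℂ) :
    V → Matrix (Fin (n+1)) (Fin (n+1)) ℂ := fun k => if k = i ∨ k = j then A else 1

lemma site_mul (n : ℕ) {i j : V} (hij : i ≠ j) (A : Matrix (Fin (n+1)) (Fin (n+1)) ℂ) :
    siteOp n i A * siteOp n j A = tens (pairFam i j A) := by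
  rw [siteOp_eq, siteOp_eq, tens_mul]
  congr 1
  ext1 k
  simp only [pairFam]
  by_cases h1 : k = i
  · subst h1; simp [hij]
  · by_cases h2 : k = j <;> simp [h1, h2, hij.symm]

lemma tens_sum {n : ℕ} {A : Type} [Fintype A] (f : V → A → ℂ)
    (M : A → Matrix (Fin (n+1)) (Fin (n+1)) ℂ) :
    tens (fun k => ∑ a, f k a • M a) = ∑ a : V → A, (∏ k, f k (a k)) • tens (fun k => M (a k)) := by
  ext x y
  simp only [tens, Matrix.sum_apply, Matrix.smul_apply, smul_eq_mul, Fintype.prod_sum,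
    Finset.prod_mul_distrib]

lemma prod_pair {i j : V} (hij : i ≠ j) (f : V → ℂ) :
    ∏ k, (if k = i ∨ k = j then f k else 1) = f i * f j := by
  rw [← Finset.prod_filter, ← Finset.prod_pair hij]
  congr 1
  ext k; simp

/-- tensor of vectors -/
def tvec {n : ℕ} (ψ : V → Fin (n+1) → ℂ) : (V → Fin (n+1)) → ℂ := fun x => ∏ k, ψ k (x k)

lemma tens_vecMulVec {n : ℕ} (ψ : V → Fin (n+1) → ℂ) :
    tens (fun k => vecMulVec (ψ k) (star (ψ k))) = vecMulVec (tvec ψ) (star (tvec ψ)) := by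
  ext x y
  simp [tens, tvec, vecMulVec_apply, Finset.prod_mul_distrib]

lemma expect_tens {n : ℕ} (ψ : V → Fin (n+1) → ℂ) (N : V → Matrix (Fin (n+1)) (Fin (n+1)) ℂ) :
    star (tvec ψ) ⬝ᵥ (tens N *ᵥ tvec ψ) = ∏ k, star (ψ k) ⬝ᵥ (N k *ᵥ ψ k) := by
  simp only [dotProduct, mulVec, tens, tvec, Fintype.prod_sum, Finset.mul_sum, Pi.star_apply,
    star_prod, Finset.prod_mul_distrib]

/-- coherent state -/
def coh (n : ℕ) (a b : ℂ) : Fin (n+1) → ℂ :=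
  fun k => (Real.sqrt (n.choose k) : ℂ) * (a ^ (k:ℕ) * b ^ (n - k))

lemma spinP_apply (n : ℕ) (j k : Fin (n+1)) : spinP n j k = if (j:ℕ) = (k:ℕ) + 1 then
    ((Real.sqrt (((k:ℝ)+1) * (n - k)) : ℝ) : ℂ) else 0 := by
  unfold spinP spinVal
  congr 4
  ring

lemma sqrt_choose (n k : ℕ) (hk : k + 1 ≤ n) : Real.sqrt (n.choose (k+1)) *
    Real.sqrt (((k:ℝ)+1) * (n - k)) * Real.sqrt (n.choose k) = n.choose k * (n - k) := by
  have h : ((n.choose (k+1) : ℝ)) * (k+1) = n.choose k * (n - k) := by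
    have := Nat.choose_succ_right_eq n k
    have h2 : ((n - k : ℕ) : ℝ) = n - k := by rw [Nat.cast_sub (by omega)]
    rw [← h2]
    exact_mod_cast this
  have hnk : (0:ℝ) ≤ n - k := by
    have : (k:ℝ) + 1 ≤ n := by exact_mod_cast hk
    linarith
  rw [← Real.sqrt_mul (by positivity), ← Real.sqrt_mul (by positivity), ← mul_assoc, h]
  rw [show (n.choose k * (n - k) * (n-k) * n.choose k : ℝ) = (n.choose k * (n-k))^2 by ring]
  exact Real.sqrt_sq (by positivity)

lemma coh_norm (n : ℕ) (a b : ℂ) (h : star a * a + star b * b = 1) :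
    star (coh n a b) ⬝ᵥ coh n a b = 1 := by
  have : star (coh n a b) ⬝ᵥ coh n a b = ∑ k : Fin (n+1),
      (star a * a)^(k:ℕ) * (star b * b)^(n - k) * (n.choose k : ℂ) := by
    refine Finset.sum_congr rfl fun k _ => ?_
    have h1 : (Real.sqrt (n.choose k) : ℂ) * (Real.sqrt (n.choose k) : ℂ) = (n.choose k : ℂ) := by
      rw [← Complex.ofReal_mul, Real.mul_self_sqrt (by positivity)]; simp
    simp only [coh, Pi.star_apply, star_mul', star_pow, mul_pow, ← h1]
    simp
    ring
  rw [this, Fin.sum_univ_eq_sum_range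
    (fun k => (star a * a)^k * (star b * b)^(n - k) * (n.choose k : ℂ)), ← add_pow, h, one_pow]

lemma coh_three (n : ℕ) (a b : ℂ) (h : star a * a + star b * b = 1) :
    star (coh n a b) ⬝ᵥ (spinMat n 2 *ᵥ coh n a b) = (n / 2 : ℂ) * (star a * a - star b * b) := by
  have : star (coh n a b) ⬝ᵥ (spinMat n 2 *ᵥ coh n a b) = ∑ k : Fin (n+1), ((k:ℂ) - n/2) * 
      ((n.choose k : ℂ) * (star a * a)^(k:ℕ) * (1 - star a * a)^(n - k)) := by
    refine Finset.sum_congr rfl fun k _ => ?_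
    have h1 : (Real.sqrt (n.choose k) : ℂ) * (Real.sqrt (n.choose k) : ℂ) = (n.choose k : ℂ) := by
      rw [← Complex.ofReal_mul, Real.mul_self_sqrt (by positivity)]; simp
    rw [show 1 - star a * a = star b * b by rw [← h]; ring]
    simp [spinMat, mulVec_diagonal, spinVal, coh]
    rw [← h1]
    ring
  rw [this, Fin.sum_univ_eq_sum_range
    (fun k => ((k:ℂ) - n/2) * ((n.choose k : ℂ) * (star a * a)^k * (1 - star a * a)^(n - k)))]
  have e1 := congrArg (Polynomial.eval (star a * a)) (bernsteinPolynomial.sum_smul (R := ℂ) n)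
  have e0 := congrArg (Polynomial.eval (star a * a)) (bernsteinPolynomial.sum (R := ℂ) n)
  simp only [Polynomial.eval_finsetSum, bernsteinPolynomial, Polynomial.eval_mul,
    Polynomial.eval_pow, Polynomial.eval_sub, Polynomial.eval_X, Polynomial.eval_one,
    Polynomial.eval_natCast, nsmul_eq_mul] at e0 e1
  simp_rw [sub_mul]
  rw [Finset.sum_sub_distrib, ← Finset.mul_sum, e0, e1, show star b * b = 1 - star a * a by rw [← h]; ring]
  ring

lemma coh_plus (n : ℕ) (a b : ℂ) (h : star a * a + star b * b = 1) :
    star (coh n a b) ⬝ᵥ (spinP n *ᵥ coh n a b) = (n : ℂ) * (star a * b) := by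
  have : star (coh n a b) ⬝ᵥ (spinP n *ᵥ coh n a b) = ∑ k : Fin n,
      star (coh n a b k.succ) * (spinP n k.succ k.castSucc * coh n a b k.castSucc) := by
    simp only [dotProduct, mulVec]
    rw [Fin.sum_univ_succ]
    have h0 : ∑ i, spinP n 0 i * coh n a b i = 0 := by
      refine Finset.sum_eq_zero fun i _ => by simp [spinP_apply]
    rw [h0, mul_zero, zero_add]
    refine Finset.sum_congr rfl fun k _ => ?_
    rw [Pi.star_apply]
    congr 1
    apply Finset.sum_eq_single
    · intro i _ hi
      rw [spinP_apply, if_neg, zero_mul]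
      intro h; apply hi; ext; simp at h ⊢; omega
    · simp
  rw [this]
  obtain _ | m := n
  · simp
  have h2 : ∀ k : Fin (m+1), star (coh (m+1) a b k.succ) * (spinP (m+1) k.succ k.castSucc *
      coh (m+1) a b k.castSucc) = ((m+1 : ℕ) : ℂ) * (star a * b) * 
        ((star a * a)^(k:ℕ) * (star b * b)^(m - k) * (m.choose k : ℂ)) := by
    intro k
    have hk := k.2
    have hs := sqrt_choose (m+1) k (by omega)
    have hc : (((m+1).choose k : ℝ) * ((m+1:ℕ) - (k:ℝ))) = ((m+1:ℕ):ℝ) * m.choose k := by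
      have := Nat.add_one_mul_choose_eq m k
      have h1 := Nat.choose_mul_succ_eq m k
      have h2 : (((m+1) - k : ℕ) : ℝ) = (m+1:ℕ) - k := by rw [Nat.cast_sub (by omega)]
      rw [← h2, mul_comm ((m+1:ℕ):ℝ)]
      exact_mod_cast h1.symm
    rw [hc] at hs
    have hs' := congrArg (fun x : ℝ => (x:ℂ)) hs
    simp only [Complex.ofReal_mul, Complex.ofReal_natCast] at hs'
    rw [spinP_apply]
    simp only [coh, Fin.val_succ, Fin.val_castSucc, if_true]
    rw [show m + 1 - (k:ℕ) = (m - k) + 1 by omega, show m + 1 - ((k:ℕ)+1) = m - k by omega]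
    simp only [star_mul', star_pow, Complex.star_def, Complex.conj_ofReal]
    calc _ = ((√↑((m + 1).choose (↑k + 1)):ℂ) * ((√((↑↑k + 1) * (↑(m + 1) - ↑↑k)):ℝ):ℂ) * (√↑((m + 1).choose ↑k):ℂ)) * ((starRingEnd ℂ a) ^ ((k:ℕ)+1) * (starRingEnd ℂ b)^(m - (k:ℕ)) * (a^(k:ℕ) * b^(m-(k:ℕ)+1))) := by ring
      _ = _ := by rw [hs']; ring
  rw [Finset.sum_congr rfl fun k _ => h2 k, ← Finset.mul_sum, Fin.sum_univ_eq_sum_range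
    (fun k => (star a * a)^k * (star b * b)^(m - k) * (m.choose k : ℂ)), ← add_pow, h, one_pow, mul_one]

end

lemma hull_compact {m : ℕ} {K : Set (Fin m → ℝ)} (hK : IsCompact K) :
    IsCompact (convexHull ℝ K) := by
  have key : convexHull ℝ K = (fun p : (Fin (m+1) → ℝ) × (Fin (m+1) → Fin m → ℝ) =>
      ∑ i, p.1 i • p.2 i) '' ((stdSimplex ℝ (Fin (m+1))) ×ˢ (Set.univ.pi fun _ => K)) := by
    apply Set.Subset.antisymm
    · intro x hx
      obtain ⟨ι, _, z, w, hz, haff, hw, hw1, hx⟩ := eq_pos_convex_span_of_mem_convexHull hx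
      have hcard : Fintype.card ι ≤ Fintype.card (Fin (m+1)) := by
        have h1 := haff.card_le_finrank_succ
        have h2 := Submodule.finrank_le (vectorSpan ℝ (Set.range z))
        simp at h2 ⊢
        omega
      obtain ⟨e⟩ := Function.Embedding.nonempty_of_card_le hcard
      have hne : Nonempty ι := by
        by_contra h
        rw [not_nonempty_iff] at h
        simp at hw1
      obtain ⟨i0⟩ := hne
      refine ⟨(Function.extend e w 0, Function.extend e z (fun _ => z i0)), ⟨⟨?_, ?_⟩, ?_⟩, ?_⟩
      · intro k
        by_cases hk : ∃ i, e i = k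
        · obtain ⟨i, rfl⟩ := hk
          simp [e.injective.extend_apply, (hw i).le]
        · simp [Function.extend_apply' _ _ _ hk]
      · rw [← hw1]
        symm
        apply Fintype.sum_of_injective e e.injective
        · intro k hk
          simp only
          rw [Function.extend_apply' _ _ _ (by simpa using hk)]; rfl
        · intro i; simp [e.injective.extend_apply]
      · intro k _
        by_cases hk : ∃ i, e i = k
        · obtain ⟨i, rfl⟩ := hk
          simp only [e.injective.extend_apply]
          exact hz ⟨i, rfl⟩
        · simp only [Function.extend_apply' _ _ _ hk]
          exact hz ⟨i0, rfl⟩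
      · rw [← hx]
        symm
        apply Fintype.sum_of_injective e e.injective
        · intro k hk
          simp only
          rw [Function.extend_apply' _ _ _ (by simpa using hk)]; simp
        · intro i; simp [e.injective.extend_apply]
    · rintro _ ⟨⟨w, z⟩, ⟨⟨hw0, hw1⟩, hz⟩, rfl⟩
      exact (convex_convexHull ℝ K).sum_mem (fun i _ => hw0 i) hw1
        (fun i _ => subset_convexHull ℝ K (hz i trivial))
  rw [key]
  apply IsCompact.image
  · exact (isCompact_stdSimplex ℝ _).prod (isCompact_univ_pi fun _ => hK)
  · fun_prop

lemma quad (N : ℕ) : ∃ (ι : Type) (_ : Fintype ι) (c t : ι → ℝ), (∀ i, 0 ≤ c i) ∧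
    (∀ i, 0 ≤ t i ∧ t i ≤ 1) ∧ ∀ p : Polynomial ℝ, p.natDegree ≤ N →
      ∑ i, c i * p.eval (t i) = ∫ x in (0:ℝ)..1, p.eval x := by
  let F : ℝ → (Fin (N+1) → ℝ) := fun t j => t ^ (j:ℕ)
  have hF : Continuous F := by fun_prop
  let K := F '' Set.Icc 0 1
  have hK : IsCompact K := isCompact_Icc.image hF
  let μ : Measure ℝ := volume.restrict (Set.Icc 0 1)
  have : IsProbabilityMeasure μ := ⟨by simp [μ]⟩
  have hint : Integrable F μ := hF.continuousOn.integrableOn_compact isCompact_Icc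
  have hmem : ∫ x, F x ∂μ ∈ convexHull ℝ K := by
    apply (convex_convexHull ℝ K).integral_mem (hull_compact hK).isClosed _ hint
    filter_upwards [ae_restrict_mem measurableSet_Icc] with x hx
    exact subset_convexHull ℝ K ⟨x, hx, rfl⟩
  obtain ⟨ι, _, z, w, hz, -, hw, hw1, hx⟩ := eq_pos_convex_span_of_mem_convexHull hmem
  have hz' : ∀ i, ∃ t : ℝ, (0 ≤ t ∧ t ≤ 1) ∧ F t = z i := fun i => by
    obtain ⟨t, ht, h⟩ := hz ⟨i, rfl⟩
    exact ⟨t, ht, h⟩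
  choose t ht htz using hz'
  refine ⟨ι, inferInstance, w, t, fun i => (hw i).le, ht, ?_⟩
  have hmom : ∀ j : ℕ, j ≤ N → ∑ i, w i * t i ^ j = ∫ x in (0:ℝ)..1, x ^ j := by
    intro j hj
    have h1 := congrFun hx ⟨j, by omega⟩
    rw [eval_integral (fun i => hint.eval i)] at h1
    rw [intervalIntegral.integral_of_le zero_le_one, ← integral_Icc_eq_integral_Ioc]
    simp only [F] at h1
    rw [← h1]
    simp [← htz, F]
  intro p hp
  have he : ∀ x, p.eval x = ∑ j ∈ Finset.range (N+1), p.coeff j * x ^ j := fun x =>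
    Polynomial.eval_eq_sum_range' (by omega) x
  simp_rw [he]
  rw [intervalIntegral.integral_finsetSum]
  · simp_rw [Finset.mul_sum]
    rw [Finset.sum_comm]
    refine Finset.sum_congr rfl fun j hj => ?_
    rw [intervalIntegral.integral_const_mul, ← hmom j (by simp at hj; omega), Finset.mul_sum]
    refine Finset.sum_congr rfl fun i _ => by ring
  · intro j _
    apply Continuous.intervalIntegrable
    fun_prop

lemma beta_nat (b : ℕ) : ∀ a : ℕ, ∫ x in (0:ℝ)..1, x ^ a * (1 - x) ^ b =
    (a.factorial * b.factorial : ℝ) / (a + b + 1).factorial := by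
  induction b with
  | zero =>
    intro a
    simp [Nat.factorial_succ]
    field_simp
  | succ b ih =>
    intro a
    have h : ∫ x in (0:ℝ)..1, ((a+1 : ℝ) * (x ^ a * (1 - x) ^ (b+1))
        - (b+1) * (x ^ (a+1) * (1-x)^b)) = 0 := by
      rw [intervalIntegral.integral_eq_sub_of_hasDerivAt (f := fun x : ℝ => x^(a+1) * (1-x)^(b+1))]
      · simp
      · intro x _
        have h1 := (hasDerivAt_pow (a+1) x).mul (((hasDerivAt_id x).const_sub 1).pow (b+1))
        refine h1.congr_deriv ?_
        simp
        ring
      · apply Continuous.intervalIntegrable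
        fun_prop
    rw [intervalIntegral.integral_sub, intervalIntegral.integral_const_mul,
      intervalIntegral.integral_const_mul, ih] at h
    · have e : a + 1 + b + 1 = a + (b+1) + 1 := by ring
      rw [e, Nat.factorial_succ a] at h
      rw [Nat.factorial_succ b]
      push_cast at h ⊢
      have ha : (a + 1 : ℝ) ≠ 0 := by positivity
      apply mul_left_cancel₀ ha
      rw [sub_eq_zero.mp h]
      ring
    · apply Continuous.intervalIntegrable
      fun_prop
    · apply Continuous.intervalIntegrable
      fun_prop

lemma quad_beta (n : ℕ) : ∃ (ι : Type) (_ : Fintype ι) (c t : ι → ℝ), (∀ i, 0 ≤ c i) ∧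
    (∀ i, 0 ≤ t i ∧ t i ≤ 1) ∧ ∀ a b : ℕ, a + b ≤ n + 1 →
      ∑ i, c i * (t i ^ a * (1 - t i) ^ b) =
        (a.factorial * b.factorial : ℝ) / (a + b + 1).factorial := by
  obtain ⟨ι, _, c, t, hc, ht, h⟩ := quad (n+1)
  refine ⟨ι, inferInstance, c, t, hc, ht, fun a b hab => ?_⟩
  have := h (Polynomial.X ^ a * (1 - Polynomial.X) ^ b) (by
    refine le_trans (Polynomial.natDegree_mul_le) ?_
    have h1 : (1 - Polynomial.X : Polynomial ℝ).natDegree ≤ 1 := by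
      refine (Polynomial.natDegree_sub_le _ _).trans (by simp)
    have h2 := Polynomial.natDegree_pow_le_of_le b h1
    simp at h2 ⊢
    omega)
  rw [← beta_nat]
  simpa using this

lemma spinMat_zero (n : ℕ) : spinMat n 0 = (1/2 : ℂ) • (spinP n + (spinP n)ᴴ) := rfl

lemma spinMat_one (n : ℕ) : spinMat n 1 = (1/(2*Complex.I) : ℂ) • (spinP n - (spinP n)ᴴ) := rfl

lemma exists_coh (n : ℕ) (Ω : EuclideanSpace ℝ (Fin 3)) (hΩ : ‖Ω‖ = 1) :
    ∃ ψ : Fin (n+1) → ℂ, star ψ ⬝ᵥ ψ = 1 ∧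
      ∀ α, star ψ ⬝ᵥ (spinMat n α *ᵥ ψ) = ((spinVal n * Ω α : ℝ) : ℂ) := by
  have hsq : Ω 0 ^ 2 + Ω 1 ^ 2 + Ω 2 ^ 2 = 1 := by
    have := EuclideanSpace.norm_sq_eq Ω
    rw [hΩ] at this
    simp [Fin.sum_univ_three] at this
    linarith
  obtain ⟨a, b, h1, h2, h3⟩ : ∃ a b : ℂ, star a * a + star b * b = 1 ∧
      star a * a - star b * b = (Ω 2 : ℂ) ∧ 2 * (star a * b) = (Ω 0 : ℂ) + Ω 1 * Complex.I := by
    by_cases hz : Ω 2 = 1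
    · have h0 : Ω 0 = 0 := by nlinarith [sq_nonneg (Ω 0), sq_nonneg (Ω 1)]
      have h1 : Ω 1 = 0 := by nlinarith [sq_nonneg (Ω 0), sq_nonneg (Ω 1)]
      exact ⟨1, 0, by simp, by simp [hz], by simp [h0, h1]⟩
    · have hlt : 0 < 1 - Ω 2 := by
        have : Ω 2 ≤ 1 := by nlinarith [sq_nonneg (Ω 0), sq_nonneg (Ω 1)]
        have := lt_of_le_of_ne this hz
        linarith
      set r := Real.sqrt ((1 - Ω 2)/2) with hr
      have hr2 : r * r = (1 - Ω 2)/2 := Real.mul_self_sqrt (by positivity)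
      have hr0 : 0 < r := Real.sqrt_pos.mpr (by positivity)
      have hb : star (r:ℂ) * r = (((1 - Ω 2)/2 : ℝ) : ℂ) := by
        rw [← hr2]; simp
      have ha : star (((Ω 0 : ℂ) - Ω 1 * Complex.I) / (2 * r)) * (((Ω 0 : ℂ) - Ω 1 * Complex.I) / (2 * r))
          = (((1 + Ω 2)/2 : ℝ) : ℂ) := by
        have e : (1 + Ω 2)/2 = (Ω 0 ^2 + Ω 1 ^ 2) / (4 * (r * r)) := by
          rw [hr2, eq_div_iff (by linarith)]; nlinarith
        rw [e]
        have : (r:ℂ) ≠ 0 := by exact_mod_cast hr0.ne'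
        simp
        field_simp
        ring_nf
        simp
      refine ⟨((Ω 0 : ℂ) - Ω 1 * Complex.I) / (2 * r), r, ?_, ?_, ?_⟩
      · rw [ha, hb]; push_cast; ring
      · rw [ha, hb]; push_cast; ring
      · have : (r:ℂ) ≠ 0 := by exact_mod_cast hr0.ne'
        simp
        field_simp
  have hp := coh_plus n a b h1
  have hm : star (coh n a b) ⬝ᵥ ((spinP n)ᴴ *ᵥ coh n a b) = star ((n : ℂ) * (star a * b)) := by
    rw [← hp, star_dotProduct, star_mulVec, conjTranspose_conjTranspose, ← dotProduct_mulVec]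
  have hz : (n:ℂ) * (star a * b) = (n/2 : ℂ) * ((Ω 0 : ℂ) + Ω 1 * Complex.I) := by
    rw [← h3]; ring
  rw [hz] at hp hm
  refine ⟨coh n a b, coh_norm n a b h1, fun α => ?_⟩
  fin_cases α
  · simp [spinMat, smul_mulVec, add_mulVec, dotProduct_add, hp, hm, spinVal]
    ring
  · change star (coh n a b) ⬝ᵥ (spinMat n 1 *ᵥ coh n a b) = ((spinVal n * Ω 1 : ℝ) : ℂ)
    rw [spinMat_one, smul_mulVec, sub_mulVec, dotProduct_smul, dotProduct_sub, hp, hm]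
    simp [spinVal]
    field_simp
    ring_nf
    simp
  · have := coh_three n a b h1
    rw [h2] at this
    simp [this, spinVal]

lemma phase_sum (N : ℕ) (hN : N ≠ 0) : ∃ ω : ℂ, star ω * ω = 1 ∧ ∀ j k : ℕ, j < N → k < N →
    ∑ l : Fin N, (ω^(l:ℕ))^j * (star (ω^(l:ℕ)))^k = if j = k then (N:ℂ) else 0 := by
  have hprim := Complex.isPrimitiveRoot_exp N hN
  set ω := Complex.exp (2 * Real.pi * Complex.I / N) with hω
  have h1 : star ω * ω = 1 := by
    have hn : ‖ω‖ = 1 := hprim.norm'_eq_one hN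
    rw [Complex.star_def, ← Complex.normSq_eq_conj_mul_self, Complex.normSq_eq_norm_sq, hn]; simp
  refine ⟨ω, h1, fun j k hj hk => ?_⟩
  have e : ∀ l : Fin N, (ω^(l:ℕ))^j * (star (ω^(l:ℕ)))^k = (ω^j * (star ω)^k)^(l:ℕ) := by
    intro l
    rw [star_pow, mul_pow, ← pow_mul, ← pow_mul, ← pow_mul, ← pow_mul, mul_comm j, mul_comm k]
  rw [Finset.sum_congr rfl fun l _ => e l, Fin.sum_univ_eq_sum_range (fun l => (ω^j * (star ω)^k)^l)]
  split_ifs with hjk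
  · subst hjk
    rw [← mul_pow, mul_comm ω, h1]; simp
  · have hz : ω^j * (star ω)^k ≠ 1 := by
      intro h
      apply hjk
      apply hprim.pow_inj hj hk
      calc ω ^ j = ω^j * ((star ω) * ω)^k := by rw [h1]; simp
        _ = (ω^j * (star ω)^k) * ω^k := by rw [mul_pow]; ring
        _ = ω^k := by rw [h, one_mul]
    rw [geom_sum_eq hz]
    have : (ω^j * (star ω)^k)^N = 1 := by
      have hh : (star ω)^N = 1 := by rw [← star_pow, hprim.pow_eq_one, star_one]
      rw [mul_pow, ← pow_mul, ← pow_mul, mul_comm j, mul_comm k, pow_mul, pow_mul, hprim.pow_eq_one, hh]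
      simp
    rw [this]; simp

lemma povm (n : ℕ) : ∃ (A : Type) (_ : Fintype A) (ψ : A → Fin (n+1) → ℂ)
    (Ω : A → EuclideanSpace ℝ (Fin 3)), (∀ a, ‖Ω a‖ = 1) ∧
    ∑ a, vecMulVec (ψ a) (star (ψ a)) = 1 ∧
    ∀ α, ((spinVal n + 1 : ℝ) : ℂ) • ∑ a, (Ω a α : ℂ) • vecMulVec (ψ a) (star (ψ a)) = spinMat n α := by
  obtain ⟨ι, _, c, t, hc, ht, hβ⟩ := quad_beta n
  obtain ⟨ω, hω1, hω⟩ := phase_sum (n+2) (by omega)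
  let u : ι × Fin (n+2) → ℂ := fun p => (Real.sqrt (t p.1) : ℂ) * ω ^ (p.2 : ℕ)
  let v : ι × Fin (n+2) → ℂ := fun p => (Real.sqrt (1 - t p.1) : ℂ)
  let ψ : ι × Fin (n+2) → Fin (n+1) → ℂ := fun p =>
    (Real.sqrt (c p.1 * ((n+1)/(n+2))) : ℂ) • coh n (u p) (v p)
  let z : ι × Fin (n+2) → ℂ := fun p => 2 * (star (u p) * v p)
  have hψ : ∀ p j k, vecMulVec (ψ p) (star (ψ p)) j k = ((c p.1 * ((n+1)/(n+2)) : ℝ) : ℂ) *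
      ((Real.sqrt (n.choose j) * Real.sqrt (n.choose k) * (Real.sqrt (t p.1) ^ ((j:ℕ)+k) *
       Real.sqrt (1 - t p.1) ^ ((n - j) + (n - k))) : ℝ) : ℂ) *
      ((ω^(p.2:ℕ))^(j:ℕ) * (star (ω^(p.2:ℕ)))^(k:ℕ)) := by
    intro p j k
    have h1 : c p.1 * ((n+1)/(n+2)) = Real.sqrt (c p.1 * ((n+1)/(n+2))) * Real.sqrt (c p.1 * ((n+1)/(n+2))) := by
      rw [Real.mul_self_sqrt]
      have := hc p.1
      positivity
    rw [h1]
    simp only [vecMulVec_apply, ψ, u, v, coh, Pi.smul_apply, Pi.star_apply, smul_eq_mul, star_mul', star_pow,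
      Complex.star_def, Complex.conj_ofReal, Complex.ofReal_mul, Complex.ofReal_pow]
    ring
  have hdiag : ∀ g : ι → ℝ, ∑ p, (g p.1 : ℂ) • vecMulVec (ψ p) (star (ψ p)) =
      diagonal (fun k : Fin (n+1) => (((n+1) * n.choose k *
        ∑ i, c i * (g i * (t i ^ (k:ℕ) * (1 - t i)^(n - k))) : ℝ) : ℂ)) := by
    intro g
    ext j k
    simp only [Matrix.sum_apply, Matrix.smul_apply, smul_eq_mul, hψ]
    rw [Fintype.sum_prod_type]
    simp only [← mul_assoc]
    simp only [mul_assoc _ _ ((star (ω^ _))^ _)]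
    simp only [← Finset.mul_sum]
    simp only [hω j k (by omega) (by omega)]
    by_cases hjk : j = k
    · subst hjk
      simp only [diagonal_apply_eq, if_true]
      rw [Finset.mul_sum, Complex.ofReal_sum]
      refine Finset.sum_congr rfl fun i _ => ?_
      have e1 : Real.sqrt (t i) ^ ((j:ℕ) + j) = t i ^ (j:ℕ) := by
        rw [← two_mul, pow_mul, Real.sq_sqrt (ht i).1]
      have e2 : Real.sqrt (1 - t i) ^ ((n - (j:ℕ)) + (n - j)) = (1 - t i) ^ (n - (j:ℕ)) := by
        rw [← two_mul, pow_mul, Real.sq_sqrt (by linarith [(ht i).2])]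
      have e3 : Real.sqrt (n.choose j) * Real.sqrt (n.choose j) = n.choose j :=
        Real.mul_self_sqrt (by positivity)
      rw [e1, e2, e3, ← Complex.ofReal_natCast, ← Complex.ofReal_mul, ← Complex.ofReal_mul,
        ← Complex.ofReal_mul]
      congr 1
      push_cast
      field_simp
    · have hjk' : (j:ℕ) ≠ k := fun h => hjk (Fin.ext h)
      simp [diagonal_apply_ne _ hjk, hjk']
  have hfac : ∀ k : ℕ, k ≤ n → ((n+1) * n.choose k : ℝ) * ((k.factorial * (n-k).factorial)
      / (k + (n-k) + 1).factorial) = 1 := by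
    intro k hk
    have h1 := Nat.choose_mul_factorial_mul_factorial hk
    rw [show k + (n-k) + 1 = n+1 by omega, Nat.factorial_succ, ← h1]
    have := (Nat.choose_pos hk).ne'
    have := Nat.factorial_ne_zero k
    have := Nat.factorial_ne_zero (n-k)
    push_cast
    field_simp
  have hfac2 : ∀ k : ℕ, k ≤ n → ((n+1) * n.choose k : ℝ) * (((k+1).factorial * (n-k).factorial)
      / (k + 1 + (n-k) + 1).factorial) = (k+1)/(n+2) := by
    intro k hk
    have h1 := Nat.choose_mul_factorial_mul_factorial hk
    rw [show k + 1 + (n-k) + 1 = n+1+1 by omega, Nat.factorial_succ (n+1), Nat.factorial_succ n, ← h1,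
      Nat.factorial_succ k]
    have := (Nat.choose_pos hk).ne'
    have := Nat.factorial_ne_zero k
    have := Nat.factorial_ne_zero (n-k)
    push_cast
    field_simp
    try ring
  have hone : ∑ p, vecMulVec (ψ p) (star (ψ p)) = 1 := by
    have := hdiag (fun _ => 1)
    simp only [Complex.ofReal_one, one_smul, one_mul] at this
    rw [this, ← diagonal_one]
    congr 1
    ext1 k
    rw [hβ _ _ (by omega), hfac _ (by omega)]
    simp
  have hthree : ((spinVal n + 1 : ℝ) : ℂ) • ∑ p, ((2 * t p.1 - 1 : ℝ) : ℂ) • vecMulVec (ψ p) (star (ψ p))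
      = spinMat n 2 := by
    rw [hdiag (fun i => 2 * t i - 1)]
    simp only [spinMat]
    rw [if_neg (by decide), if_neg (by decide), ← diagonal_smul]
    congr 1
    ext1 k
    have e : ∑ i, c i * ((2 * t i - 1) * (t i ^ (k:ℕ) * (1 - t i)^(n - (k:ℕ)))) =
        2 * ∑ i, c i * (t i ^ ((k:ℕ)+1) * (1 - t i)^(n - (k:ℕ))) -
          ∑ i, c i * (t i ^ (k:ℕ) * (1 - t i)^(n - (k:ℕ))) := by
      rw [Finset.mul_sum, ← Finset.sum_sub_distrib]
      refine Finset.sum_congr rfl fun i _ => by ring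
    rw [Pi.smul_apply, smul_eq_mul, e, hβ _ _ (by omega), hβ _ _ (by omega), mul_sub, hfac _ (by omega),
      mul_left_comm, hfac2 _ (by omega), ← Complex.ofReal_mul]
    congr 1
    unfold spinVal
    field_simp
    ring
  have hplus : ((spinVal n + 1 : ℝ) : ℂ) • ∑ p, z p • vecMulVec (ψ p) (star (ψ p)) = spinP n := by
    ext j k
    simp only [Matrix.sum_apply, Matrix.smul_apply, smul_eq_mul, hψ]
    have e : ∀ p : ι × Fin (n+2), z p * (((c p.1 * ((n+1)/(n+2)) : ℝ) : ℂ) *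
      ((Real.sqrt (n.choose j) * Real.sqrt (n.choose k) * (Real.sqrt (t p.1) ^ ((j:ℕ)+k) *
       Real.sqrt (1 - t p.1) ^ ((n - j) + (n - k))) : ℝ) : ℂ) *
      ((ω^(p.2:ℕ))^(j:ℕ) * (star (ω^(p.2:ℕ)))^(k:ℕ))) = 
      ((2 * (c p.1 * ((n+1)/(n+2))) * (Real.sqrt (n.choose j) * Real.sqrt (n.choose k) * (Real.sqrt (t p.1) ^ ((j:ℕ)+k+1) *
       Real.sqrt (1 - t p.1) ^ ((n - j) + (n - k) + 1))) : ℝ) : ℂ) * 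
      ((ω^(p.2:ℕ))^(j:ℕ) * (star (ω^(p.2:ℕ)))^((k:ℕ)+1)) := by
      intro p
      simp only [z, u, v, star_mul', star_pow, Complex.star_def, Complex.conj_ofReal, Complex.ofReal_mul,
        Complex.ofReal_pow, Complex.ofReal_ofNat]
      ring
    simp only [e]
    rw [Fintype.sum_prod_type]
    simp only [← Finset.mul_sum]
    simp only [hω j (k+1) (by omega) (by omega)]
    rw [spinP_apply]
    split_ifs with hjk
    · have hkn : (k:ℕ) + 1 ≤ n := by omega
      have e2 : ∀ i, ((2 * (c i * ((n+1)/(n+2))) * (Real.sqrt (n.choose j) * Real.sqrt (n.choose k) * (Real.sqrt (t i) ^ ((j:ℕ)+k+1) *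
       Real.sqrt (1 - t i) ^ ((n - j) + (n - k) + 1))) : ℝ) : ℂ) * ((n+2 : ℕ) : ℂ) = 
        ((2 * (n+1) * (Real.sqrt (n.choose j) * Real.sqrt (n.choose k)) *
          (c i * (t i ^ ((k:ℕ) + 1) * (1 - t i) ^ (n - (k:ℕ)))) : ℝ) : ℂ) := by
        intro i
        have e1 : Real.sqrt (t i) ^ ((j:ℕ) + k + 1) = t i ^ ((k:ℕ)+1) := by
          rw [show (j:ℕ) + k + 1 = 2 * (k+1) by omega, pow_mul, Real.sq_sqrt (ht i).1]
        have e2 : Real.sqrt (1 - t i) ^ ((n - (j:ℕ)) + (n - k) + 1) = (1 - t i) ^ (n - (k:ℕ)) := by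
          rw [show (n - (j:ℕ)) + (n - k) + 1 = 2 * (n - k) by omega, pow_mul,
            Real.sq_sqrt (by linarith [(ht i).2])]
        rw [e1, e2, ← Complex.ofReal_natCast, ← Complex.ofReal_mul]
        congr 1
        push_cast
        field_simp
      simp only [e2]
      rw [← Complex.ofReal_sum, ← Finset.mul_sum, hβ _ _ (by omega), ← Complex.ofReal_mul]
      congr 1
      have h2 := hfac2 k (by omega)
      have hs := sqrt_choose n k hkn
      have hC : Real.sqrt (n.choose k) * Real.sqrt (n.choose k) = n.choose k :=
        Real.mul_self_sqrt (by positivity)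
      have hCpos : (0:ℝ) < n.choose k := by exact_mod_cast Nat.choose_pos (by omega)
      have hnk : (0:ℝ) < n - k := by
        have : ((k:ℕ):ℝ) + 1 ≤ n := by exact_mod_cast hkn
        linarith
      rw [hjk]
      set R := Real.sqrt (((k:ℕ):ℝ)+1) with hR
      set X := (((((k:ℕ)+1).factorial : ℝ) * (n-(k:ℕ)).factorial) / ((k:ℕ) + 1 + (n-(k:ℕ)) + 1).factorial)
      set q := Real.sqrt ((((k:ℕ):ℝ)+1) * (n - (k:ℕ))) with hq
      have hqq : q * q = (((k:ℕ):ℝ)+1) * (n - (k:ℕ)) := Real.mul_self_sqrt (by positivity)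
      have hq0 : 0 < q := Real.sqrt_pos.mpr (by positivity)
      set D := Real.sqrt (n.choose ((k:ℕ)+1))
      set Ck := Real.sqrt (n.choose (k:ℕ))
      apply mul_right_cancel₀ hq0.ne'
      have hX : (n + 1) * (n.choose (k:ℕ)) * X * (n+2) = ((k:ℕ):ℝ) + 1 := by
        rw [h2]; field_simp
      unfold spinVal
      calc _ = (n + 1) * (D * q * Ck) * X * (n+2) := by ring
        _ = ((n + 1) * (n.choose (k:ℕ)) * X * (n+2)) * (n - k) := by rw [hs]; ring
        _ = _ := by rw [hX, hqq]
    · simp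
  have huv : ∀ p, star (u p) * u p = (t p.1 : ℂ) ∧ star (v p) * v p = ((1 - t p.1 : ℝ) : ℂ) := by
    intro p
    constructor
    · have h1 : star (ω^(p.2:ℕ)) * ω^(p.2:ℕ) = 1 := by rw [star_pow, ← mul_pow, hω1, one_pow]
      have h2 : (Real.sqrt (t p.1) : ℂ) * (Real.sqrt (t p.1) : ℂ) = (t p.1 : ℂ) := by
        rw [← Complex.ofReal_mul, Real.mul_self_sqrt (ht p.1).1]
      simp only [u, star_mul']
      rw [← h2]
      calc _ = star (Real.sqrt (t p.1) : ℂ) * (Real.sqrt (t p.1) : ℂ) * (star (ω^(p.2:ℕ)) * ω^(p.2:ℕ)) := by ring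
        _ = _ := by rw [h1]; simp
    · simp only [v, Complex.star_def, Complex.conj_ofReal]
      rw [← Complex.ofReal_mul, Real.mul_self_sqrt (by linarith [(ht p.1).2])]
  have hminus : ((spinVal n + 1 : ℝ) : ℂ) • ∑ p, star (z p) • vecMulVec (ψ p) (star (ψ p)) = (spinP n)ᴴ := by
    rw [← hplus, conjTranspose_smul, conjTranspose_sum]
    simp [conjTranspose_smul, conjTranspose_vecMulVec]
  refine ⟨ι × Fin (n+2), inferInstance, ψ, fun p => !₂[(z p).re, (z p).im, 2 * t p.1 - 1], ?_, hone, ?_⟩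
  · intro p
    have hz : (z p).re ^ 2 + (z p).im ^ 2 = 4 * (t p.1 * (1 - t p.1)) := by
      have : (((z p).re ^ 2 + (z p).im ^ 2 : ℝ) : ℂ) = ((4 * (t p.1 * (1 - t p.1)) : ℝ) : ℂ) := by
        rw [show (z p).re ^ 2 + (z p).im ^ 2 = Complex.normSq (z p) by rw [Complex.normSq_apply]; ring,
          Complex.normSq_eq_conj_mul_self, ← Complex.star_def]
        rw [Complex.ofReal_mul, Complex.ofReal_mul, ← (huv p).1, ← (huv p).2]
        simp only [z, star_mul', star_star]
        simp
        ring
      exact_mod_cast this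
    rw [EuclideanSpace.norm_eq, Real.sqrt_eq_one]
    simp [Fin.sum_univ_three]
    rw [hz]; ring
  · intro α
    fin_cases α
    · have : ∀ p, (((z p).re : ℝ) : ℂ) = (1/2 : ℂ) * (z p + star (z p)) := fun p => by
        rw [Complex.star_def, Complex.add_conj]; push_cast; ring
      change ((spinVal n + 1 : ℝ) : ℂ) • ∑ p, (((z p).re : ℝ) : ℂ) • _ = spinMat n 0
      rw [spinMat_zero, ← hminus, ← hplus]
      simp only [this, mul_smul, add_smul, Finset.sum_add_distrib, ← Finset.smul_sum]
      rw [← smul_add, smul_comm]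
    · have : ∀ p, (((z p).im : ℝ) : ℂ) = (1/(2*Complex.I) : ℂ) * (z p - star (z p)) := fun p => by
        rw [Complex.star_def, Complex.sub_conj]; push_cast; field_simp
      change ((spinVal n + 1 : ℝ) : ℂ) • ∑ p, (((z p).im : ℝ) : ℂ) • _ = spinMat n 1
      rw [spinMat_one, ← hminus, ← hplus]
      simp only [this, mul_smul, sub_smul, Finset.sum_sub_distrib, ← Finset.smul_sum]
      rw [← smul_sub, smul_comm]
    · simpa using hthree

section
set_option linter.unusedSectionVars false
variable {V : Type*} [Fintype V] [DecidableEq V]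

lemma heis_povm (n : ℕ) {A : Type} [Fintype A] (M : A → Matrix (Fin (n+1)) (Fin (n+1)) ℂ)
    (Ω : A → EuclideanSpace ℝ (Fin 3)) (h1 : ∑ a, M a = 1)
    (hα : ∀ α, ((spinVal n + 1 : ℝ) : ℂ) • ∑ a, (Ω a α : ℂ) • M a = spinMat n α)
    {i j : V} (hij : i ≠ j) :
    heis n i j = ∑ a : V → A, (((spinVal n + 1)^2 * ⟪Ω (a i), Ω (a j)⟫ : ℝ) : ℂ) •
      tens (fun k => M (a k)) := by
  have hs : ∀ α, siteOp n i (spinMat n α) * siteOp n j (spinMat n α) =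
      ∑ a : V → A, (((spinVal n + 1)^2 * (Ω (a i) α * Ω (a j) α) : ℝ) : ℂ) •
        tens (fun k => M (a k)) := by
    intro α
    rw [site_mul n hij]
    have : pairFam i j (spinMat n α) = fun k => ∑ a, (if k = i ∨ k = j then
        (((spinVal n + 1) * Ω a α : ℝ) : ℂ) else 1) • M a := by
      ext1 k
      simp only [pairFam]
      split_ifs
      · rw [← hα, Finset.smul_sum]
        refine Finset.sum_congr rfl fun a _ => ?_
        rw [smul_smul]; push_cast; rfl
      · simp [h1]
    rw [this, tens_sum]
    refine Finset.sum_congr rfl fun a _ => ?_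
    rw [prod_pair hij (fun k => (((spinVal n + 1) * Ω (a k) α : ℝ) : ℂ))]
    congr 1
    push_cast
    ring
  rw [heis]
  simp only [hs]
  rw [Finset.sum_comm]
  refine Finset.sum_congr rfl fun a _ => ?_
  rw [← Finset.sum_smul, ← Complex.ofReal_sum, ← Finset.mul_sum, PiLp.inner_apply]
  congr 3
  refine Finset.sum_congr rfl fun α _ => ?_
  simp [mul_comm]

lemma hQMC_povm (n : ℕ) (hn : 1 ≤ n) (w : V → V → ℝ) (hloop : ∀ i, w i i = 0) {A : Type} [Fintype A]
    (M : A → Matrix (Fin (n+1)) (Fin (n+1)) ℂ)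
    (Ω : A → EuclideanSpace ℝ (Fin 3)) (h1 : ∑ a, M a = 1)
    (hα : ∀ α, ((spinVal n + 1 : ℝ) : ℂ) • ∑ a, (Ω a α : ℂ) • M a = spinMat n α) :
    hQMC n w = ∑ a : V → A, (((1/4) * ∑ i, ∑ j, w i j * (1 - ((spinVal n + 1) / spinVal n)^2 *
      ⟪Ω (a i), Ω (a j)⟫) : ℝ) : ℂ) • tens (fun k => M (a k)) := by
  have ht : (1 : Matrix (V → Fin (n+1)) (V → Fin (n+1)) ℂ) = ∑ a : V → A, tens (fun k => M (a k)) := by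
    have := tens_sum (V := V) (fun _ _ => 1) M
    simpa [h1, tens_one] using this
  have hterm : ∀ i j : V, (w i j : ℂ) • ((1 : Matrix (V → Fin (n+1)) (V → Fin (n+1)) ℂ)
      - ((1/(spinVal n)^2 : ℝ) : ℂ) • heis n i j) = ∑ a : V → A,
        ((w i j * (1 - ((spinVal n + 1) / spinVal n)^2 * ⟪Ω (a i), Ω (a j)⟫) : ℝ) : ℂ) •
          tens (fun k => M (a k)) := by
    intro i j
    by_cases hij : i = j
    · subst hij; simp [hloop]
    · rw [heis_povm n M Ω h1 hα hij, ht, Finset.smul_sum, ← Finset.sum_sub_distrib, Finset.smul_sum]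
      refine Finset.sum_congr rfl fun a _ => ?_
      rw [smul_smul, ← one_smul ℂ (tens (fun k => M (a k))), smul_smul, ← sub_smul, smul_smul, smul_smul]
      congr 1
      push_cast
      ring
  rw [hQMC]
  simp only [hterm]
  have : ∀ i : V, ∑ j, ∑ a : V → A,
        ((w i j * (1 - ((spinVal n + 1) / spinVal n)^2 * ⟪Ω (a i), Ω (a j)⟫) : ℝ) : ℂ) •
          tens (fun k => M (a k)) = ∑ a : V → A, ∑ j, 
        ((w i j * (1 - ((spinVal n + 1) / spinVal n)^2 * ⟪Ω (a i), Ω (a j)⟫) : ℝ) : ℂ) •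
          tens (fun k => M (a k)) := fun i => Finset.sum_comm
  simp only [this]
  rw [Finset.sum_comm, Finset.smul_sum]
  refine Finset.sum_congr rfl fun a _ => ?_
  simp only [← Finset.sum_smul, smul_smul, ← Complex.ofReal_sum]
  congr 1
  push_cast
  ring

lemma cut_bdd (w : V → V → ℝ) (hnn : ∀ i j, 0 ≤ w i j) :
    BddAbove {x : ℝ | ∃ Ω : V → EuclideanSpace ℝ (Fin 3), (∀ i, ‖Ω i‖ = 1) ∧ x = cutEnergy w Ω} := by
  refine ⟨(1/4) * ∑ i, ∑ j, w i j * 2, ?_⟩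
  rintro _ ⟨Ω, hΩ, rfl⟩
  unfold cutEnergy
  gcongr with i _ j _
  · exact hnn i j
  · have := (abs_le.mp (abs_real_inner_le_norm (Ω i) (Ω j))).1
    rw [hΩ, hΩ] at this
    linarith

lemma prodVal_nonneg (w : V → V → ℝ) (hnn : ∀ i j, 0 ≤ w i j) : 0 ≤ prodVal w := by
  apply le_csSup (cut_bdd w hnn)
  refine ⟨fun _ => EuclideanSpace.single 0 1, by simp, ?_⟩
  simp [cutEnergy]

lemma star_dot_self_eq {m : Type*} [Fintype m] (v : m → ℂ) :
    star v ⬝ᵥ v = ((∑ x, ‖v x‖^2 : ℝ) : ℂ) := by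
  simp only [dotProduct, Pi.star_apply, Complex.star_def, Complex.ofReal_sum]
  refine Finset.sum_congr rfl fun x _ => ?_
  rw [Complex.conj_mul']; push_cast; rfl

lemma eig_le (n : ℕ) (hn : 1 ≤ n) (w : V → V → ℝ) (hnn : ∀ i j, 0 ≤ w i j)
    (hloop : ∀ i, w i i = 0) : (hQMC n w).IsHermitian ∧ 
    ∀ (r : ℝ) (v : (V → Fin (n+1)) → ℂ), v ≠ 0 → hQMC n w *ᵥ v = (r:ℂ) • v →
      r ≤ ((spinVal n + 1) / spinVal n)^2 * prodVal w := by
  obtain ⟨A, _, ψ, Ω, hΩ, h1, hα⟩ := povm n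
  have hH := hQMC_povm n hn w hloop _ Ω h1 hα
  have h1' : (1 : Matrix (V → Fin (n+1)) (V → Fin (n+1)) ℂ) =
      ∑ a : V → A, tens (fun k => vecMulVec (ψ (a k)) (star (ψ (a k)))) := by
    have := tens_sum (V := V) (fun _ _ => 1) (fun a => vecMulVec (ψ a) (star (ψ a)))
    simpa [h1, tens_one] using this
  simp only [tens_vecMulVec] at hH h1'
  have hS : 0 < spinVal n := by unfold spinVal; positivity
  constructor
  · rw [hH, Matrix.IsHermitian, conjTranspose_sum]
    refine Finset.sum_congr rfl fun a _ => ?_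
    rw [conjTranspose_smul, conjTranspose_vecMulVec, star_star, Complex.star_def, Complex.conj_ofReal]
  · intro r v hv hr
    set q : (V → A) → ℝ := fun a => ‖star v ⬝ᵥ (tvec fun k => ψ (a k))‖^2 with hq
    have hquad : ∀ a : V → A, star v ⬝ᵥ (vecMulVec (tvec fun k => ψ (a k))
        (star (tvec fun k => ψ (a k))) *ᵥ v) = (q a : ℂ) := by
      intro a
      rw [vecMulVec_mulVec, dotProduct_smul, star_dotProduct, hq]
      simp only [MulOpposite.smul_eq_mul_unop, MulOpposite.unop_op]
      rw [Complex.star_def, Complex.mul_conj']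
      push_cast; rfl
    have hsum1 : ∑ x, ‖v x‖^2 = ∑ a, q a := by
      have : star v ⬝ᵥ ((1 : Matrix (V → Fin (n+1)) (V → Fin (n+1)) ℂ) *ᵥ v) = ((∑ a, q a : ℝ) : ℂ) := by
        rw [h1', sum_mulVec, dotProduct_sum, Complex.ofReal_sum]
        exact Finset.sum_congr rfl fun a _ => hquad a
      rw [one_mulVec, star_dot_self_eq] at this
      exact_mod_cast this
    have hsumH : r * ∑ x, ‖v x‖^2 = ∑ a : V → A, ((1/4) * ∑ i, ∑ j, w i j *
        (1 - ((spinVal n + 1) / spinVal n)^2 * ⟪Ω (a i), Ω (a j)⟫)) * q a := by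
      have h2 := congrArg (fun y => star v ⬝ᵥ y) hr
      rw [hH, sum_mulVec, dotProduct_sum, dotProduct_smul, star_dot_self_eq] at h2
      simp only [smul_mulVec, dotProduct_smul, hquad, smul_eq_mul] at h2
      exact_mod_cast h2.symm
    have hpos : 0 < ∑ x, ‖v x‖^2 := by
      obtain ⟨x, hx⟩ := Function.ne_iff.mp hv
      refine Finset.sum_pos' (fun _ _ => by positivity) ⟨x, Finset.mem_univ _, ?_⟩
      have : v x ≠ 0 := hx
      positivity
    have hc1 : 1 ≤ ((spinVal n + 1) / spinVal n)^2 := by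
      apply one_le_pow₀
      rw [le_div_iff₀ hS]; linarith
    have hE : ∀ a : V → A, (1/4) * ∑ i, ∑ j, w i j *
        (1 - ((spinVal n + 1) / spinVal n)^2 * ⟪Ω (a i), Ω (a j)⟫) ≤
        ((spinVal n + 1) / spinVal n)^2 * prodVal w := by
      intro a
      have hp : cutEnergy w (fun i => Ω (a i)) ≤ prodVal w :=
        le_csSup (cut_bdd w hnn) ⟨_, fun i => hΩ _, rfl⟩
      refine le_trans ?_ (mul_le_mul_of_nonneg_left hp (by positivity))
      rw [cutEnergy, mul_left_comm]
      apply mul_le_mul_of_nonneg_left _ (by norm_num)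
      rw [Finset.mul_sum]
      refine Finset.sum_le_sum fun i _ => ?_
      rw [Finset.mul_sum]
      refine Finset.sum_le_sum fun j _ => ?_
      rw [mul_left_comm]
      apply mul_le_mul_of_nonneg_left _ (hnn i j)
      nlinarith
    have : r * ∑ x, ‖v x‖^2 ≤ (((spinVal n + 1) / spinVal n)^2 * prodVal w) * ∑ x, ‖v x‖^2 := by
      rw [hsumH, hsum1, Finset.mul_sum]
      exact Finset.sum_le_sum fun a _ => mul_le_mul_of_nonneg_right (hE a) (by positivity)
    exact le_of_mul_le_mul_right this hpos

open scoped ComplexOrder in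
lemma rayleigh {m : Type*} [Fintype m] [DecidableEq m] (H : Matrix m m ℂ) (hH : H.IsHermitian)
    (hb : BddAbove {r : ℝ | ∃ v : m → ℂ, v ≠ 0 ∧ H.mulVec v = (r : ℂ) • v})
    (v : m → ℂ) (hv : star v ⬝ᵥ v = 1) (x : ℝ) (hx : star v ⬝ᵥ (H *ᵥ v) = (x:ℂ)) : x ≤ maxEig H := by
  have hK : ((maxEig H : ℂ) • (1 : Matrix m m ℂ) - H).IsHermitian := by
    apply IsHermitian.sub _ hH
    rw [Matrix.IsHermitian, conjTranspose_smul]; simp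
  have hpsd : ((maxEig H : ℂ) • (1 : Matrix m m ℂ) - H).PosSemidef := by
    rw [hK.posSemidef_iff_eigenvalues_nonneg]
    intro i
    have he := hK.mulVec_eigenvectorBasis i
    set u : m → ℂ := ⇑(hK.eigenvectorBasis i) with hu
    have hu0 : u ≠ 0 := by
      intro h0
      apply hK.eigenvectorBasis.orthonormal.ne_zero i
      ext k
      exact congrFun h0 k
    have hmem : maxEig H - hK.eigenvalues i ≤ maxEig H := by
      apply le_csSup hb
      refine ⟨u, hu0, ?_⟩
      rw [sub_mulVec, smul_mulVec, one_mulVec] at he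
      rw [Complex.ofReal_sub, sub_smul, sub_eq_iff_eq_add.mp he]
      ext k
      simp
    simpa using hmem
  have := hpsd.dotProduct_mulVec_nonneg v
  rw [sub_mulVec, smul_mulVec, one_mulVec, dotProduct_sub, dotProduct_smul, hv, hx, smul_eq_mul, mul_one,
    ← Complex.ofReal_sub, Complex.zero_le_real] at this
  linarith

lemma coh_energy (n : ℕ) (hn : 1 ≤ n) (w : V → V → ℝ) (hloop : ∀ i, w i i = 0)
    (Ω : V → EuclideanSpace ℝ (Fin 3)) (hΩ : ∀ i, ‖Ω i‖ = 1) :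
    ∃ v : (V → Fin (n+1)) → ℂ, star v ⬝ᵥ v = 1 ∧
      star v ⬝ᵥ (hQMC n w *ᵥ v) = (cutEnergy w Ω : ℂ) := by
  choose ψ h1 hα using fun i => exists_coh n (Ω i) (hΩ i)
  have hS : spinVal n ≠ 0 := by unfold spinVal; positivity
  have hv : star (tvec ψ) ⬝ᵥ tvec ψ = 1 := by
    have := expect_tens ψ (fun _ => 1)
    simpa [tens_one, h1] using this
  refine ⟨tvec ψ, hv, ?_⟩
  have hheis : ∀ i j : V, i ≠ j → star (tvec ψ) ⬝ᵥ (heis n i j *ᵥ tvec ψ) =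
      (((spinVal n)^2 * ⟪Ω i, Ω j⟫ : ℝ) : ℂ) := by
    intro i j hij
    have hs : ∀ α, star (tvec ψ) ⬝ᵥ ((siteOp n i (spinMat n α) * siteOp n j (spinMat n α)) *ᵥ tvec ψ)
        = (((spinVal n)^2 * (Ω i α * Ω j α) : ℝ) : ℂ) := by
      intro α
      rw [site_mul n hij, expect_tens]
      have : ∀ k, star (ψ k) ⬝ᵥ (pairFam i j (spinMat n α) k *ᵥ ψ k) =
          if k = i ∨ k = j then ((spinVal n * Ω k α : ℝ) : ℂ) else 1 := by
        intro k
        simp only [pairFam]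
        split_ifs
        · exact hα k α
        · rw [one_mulVec, h1]
      rw [Finset.prod_congr rfl fun k _ => this k, prod_pair hij (fun k => ((spinVal n * Ω k α : ℝ) : ℂ))]
      push_cast
      ring
    rw [heis, sum_mulVec, dotProduct_sum, Finset.sum_congr rfl fun α _ => hs α, ← Complex.ofReal_sum,
      ← Finset.mul_sum, PiLp.inner_apply]
    congr 2
    refine Finset.sum_congr rfl fun α _ => ?_
    simp [mul_comm]
  rw [hQMC, smul_mulVec, dotProduct_smul, sum_mulVec, dotProduct_sum, cutEnergy]
  push_cast
  rw [smul_eq_mul]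
  congr 1
  refine Finset.sum_congr rfl fun i _ => ?_
  rw [sum_mulVec, dotProduct_sum]
  refine Finset.sum_congr rfl fun j _ => ?_
  by_cases hij : i = j
  · subst hij; simp [hloop]
  · rw [smul_mulVec, dotProduct_smul, sub_mulVec, one_mulVec, dotProduct_sub, smul_mulVec, dotProduct_smul,
      hheis i j hij, hv, smul_eq_mul, smul_eq_mul]
    have : (spinVal n : ℂ) ≠ 0 := by exact_mod_cast hS
    push_cast
    field_simp

end

/-- For every half-integer `S ≥ 1/2` and every finite undirected graph `G`
with nonnegative edge weights, `(S/(S+1))² · QMaxCut_S(G) ≤ Prod(G) ≤ QMaxCut_S(G)`. -/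
theorem prod_approximates_qMaxCut (n : ℕ) (hn : 1 ≤ n) {V : Type*} [Fintype V] [DecidableEq V]
    (w : V → V → ℝ) (hsymm : ∀ i j, w i j = w j i) (hnn : ∀ i j, 0 ≤ w i j)
    (hloop : ∀ i, w i i = 0) :
    (spinVal n / (spinVal n + 1)) ^ 2 * qMaxCut n w ≤ prodVal w
      ∧ prodVal w ≤ qMaxCut n w := by
  obtain ⟨hH, hle⟩ := eig_le n hn w hnn hloop
  have hS : 0 < spinVal n := by unfold spinVal; positivity
  have hp0 := prodVal_nonneg w hnn
  constructor
  · have h1 : qMaxCut n w ≤ ((spinVal n + 1) / spinVal n)^2 * prodVal w := by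
      apply Real.sSup_le
      · rintro r ⟨v, hv, hr⟩
        exact hle r v hv hr
      · positivity
    calc (spinVal n / (spinVal n + 1)) ^ 2 * qMaxCut n w
        ≤ (spinVal n / (spinVal n + 1)) ^ 2 * (((spinVal n + 1) / spinVal n)^2 * prodVal w) := by gcongr
      _ = prodVal w := by field_simp
  · apply csSup_le
    · exact ⟨_, fun _ => EuclideanSpace.single 0 1, by simp, rfl⟩
    · rintro _ ⟨Ω, hΩ, rfl⟩
      obtain ⟨v, hv, hE⟩ := coh_energy n hn w hloop Ω hΩ
      apply rayleigh _ hH _ v hv _ hE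
      refine ⟨((spinVal n + 1) / spinVal n)^2 * prodVal w, ?_⟩
      rintro r ⟨v, hv, hr⟩
      exact hle r v hv hr

end
end

section
/- Let S ≥ 1/2 be a half-integer, G = (V,E,w) a finite undirected graph with nonnegative edge weights, and suppose unit vectors Ω_i ∈ S² ⊂ ℝ³ assigned to the vertices satisfy (1/2) Σ_{{i,j}∈E} w_ij (1 − Ω_i·Ω_j) ≥ α_BOV · Prod(G), where Prod(G) = max over assignments of unit vectors to vertices of (1/2) Σ_{{i,j}∈E} w_ij (1 − Ω_i·Ω_j). Then (1/2) Σ_{{i,j}∈E} w_ij (1 − Ω_i·Ω_j) ≥ (S/(S+1))² α_BOV · QMaxCut_S(G). -/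
open Matrix MeasureTheory Filter
open scoped BigOperators RealInnerProductSpace Kronecker

noncomputable section

/-- The Gauss hypergeometric function `₂F₁(1/2, 1/2; 5/2; x)`, defined by its power series
`Σ_{k≥0} ((1/2)_k (1/2)_k)/((5/2)_k k!) x^k`, where `(a)_k` is the rising factorial. -/
def hypF (x : ℝ) : ℝ :=
  ∑' k : ℕ,
    ((∏ m ∈ Finset.range k, ((1:ℝ)/2 + m)) * (∏ m ∈ Finset.range k, ((1:ℝ)/2 + m))
      / ((∏ m ∈ Finset.range k, ((5:ℝ)/2 + m)) * (Nat.factorial k))) * x ^ k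

/-- `F*(3, ρ) = (8/(3π)) ρ ₂F₁(1/2,1/2;5/2;ρ²)`. -/
def Fstar (ρ : ℝ) : ℝ := (8 / (3 * Real.pi)) * ρ * hypF (ρ ^ 2)

/-- `f_S(ρ) = (1 − F*(3,ρ)) / (1 − ((S+1)/S) ρ)`. -/
def fS (S ρ : ℝ) : ℝ := (1 - Fstar ρ) / (1 - ((S + 1) / S) * ρ)

/-- `g(ρ) = (1 − F*(3,ρ)) / (1 − ρ)`. -/
def gBOV (ρ : ℝ) : ℝ := (1 - Fstar ρ) / (1 - ρ)

/-- `α_GP(S) = inf_{ρ ∈ [−1, 0)} f_S(ρ)`. -/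
def alphaGP (S : ℝ) : ℝ := sInf (fS S '' Set.Ico (-1 : ℝ) 0)

/-- `α_BOV = inf_{ρ ∈ [−1, 0)} g(ρ)`. -/
def alphaBOV : ℝ := sInf (gBOV '' Set.Ico (-1 : ℝ) 0)

/-- convex hulls of compact curves are closed -/
lemma aux_isCompact_hull (d : ℕ) (f : ℝ → (Fin d → ℝ)) (hf : Continuous f) :
    IsCompact (convexHull ℝ (f '' Set.Icc 0 1)) := by
  set M := d + 1 with hM
  let Φ : (Fin M → ℝ) × (Fin M → ℝ) → (Fin d → ℝ) := fun p => ∑ i, p.1 i • f (p.2 i)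
  have hΦ : Continuous Φ := by fun_prop
  have hK : IsCompact (stdSimplex ℝ (Fin M) ×ˢ (Set.univ.pi fun _ : Fin M => Set.Icc (0:ℝ) 1)) :=
    (isCompact_stdSimplex ℝ (Fin M)).prod (isCompact_univ_pi fun _ => isCompact_Icc)
  have : convexHull ℝ (f '' Set.Icc 0 1) =
      Φ '' (stdSimplex ℝ (Fin M) ×ˢ (Set.univ.pi fun _ : Fin M => Set.Icc (0:ℝ) 1)) := by
    apply Set.Subset.antisymm
    · intro x hx
      obtain ⟨ι, _, z, q, hz, hai, hq, hq1, hx⟩ := eq_pos_convex_span_of_mem_convexHull hx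
      have hcard : Fintype.card ι ≤ Fintype.card (Fin M) := by
        have := hai.card_le_finrank_succ
        have h2 := Submodule.finrank_le (vectorSpan ℝ (Set.range z))
        simp only [Module.finrank_fin_fun] at h2
        simp only [Fintype.card_fin]; omega
      obtain ⟨e⟩ := Function.Embedding.nonempty_of_card_le hcard
      have hz' : ∀ i, ∃ t ∈ Set.Icc (0:ℝ) 1, f t = z i := fun i => by
        have := hz ⟨i, rfl⟩
        simpa using this
      choose t ht htz using hz'
      have key : ∀ i, Function.extend e q 0 (e i) = q i := fun i => e.injective.extend_apply _ _ _
      have key2 : ∀ i, Function.extend e t 0 (e i) = t i := fun i => e.injective.extend_apply _ _ _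
      have hsum : ∀ (E : Type) [AddCommMonoid E] (g : Fin M → E),
          (∀ j, (¬ ∃ i, e i = j) → g j = 0) → ∑ j, g j = ∑ i, g (e i) := by
        intro E _ g hg
        rw [← Finset.sum_map Finset.univ e g]
        symm
        apply Finset.sum_subset (Finset.subset_univ _)
        intro j _ hj
        apply hg
        simpa using hj
      refine ⟨(Function.extend e q 0, Function.extend e t 0), ⟨⟨?_, ?_⟩, ?_⟩, ?_⟩
      · intro j
        by_cases h : ∃ i, e i = j
        · obtain ⟨i, rfl⟩ := h
          simp only [key]; exact (hq i).le
        · simp [Function.extend_apply' _ _ _ h]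
      · rw [hsum]
        · simp only [key, hq1]
        · intro j h
          simp [Function.extend_apply' _ _ _ h]
      · intro j _
        by_cases h : ∃ i, e i = j
        · obtain ⟨i, rfl⟩ := h
          simp only [key2]; exact ht i
        · simp [Function.extend_apply' _ _ _ h]
      · simp only [Φ]
        rw [hsum]
        · simp only [key, key2, htz, hx]
        · intro j h
          simp [Function.extend_apply' _ _ _ h]
    · rintro x ⟨⟨q, t⟩, ⟨⟨hq, hq1⟩, ht⟩, rfl⟩
      exact mem_convexHull_of_exists_fintype q (fun i => f (t i)) hq hq1
        (fun i => ⟨t i, ht i trivial, rfl⟩) rfl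
  rw [this]
  exact hK.image hΦ

lemma aux_moments (N : ℕ) : ∃ (ι : Type) (_ : Fintype ι) (q t : ι → ℝ), (∀ i, 0 ≤ q i) ∧
    (∀ i, t i ∈ Set.Icc (0:ℝ) 1) ∧ ∀ p : ℕ, p ≤ N → ∑ i, q i * t i ^ p = 1 / (p + 1 : ℝ) := by
  let f : ℝ → (Fin (N+1) → ℝ) := fun t p => t ^ (p : ℕ)
  have hf : Continuous f := by fun_prop
  let μ : Measure ℝ := volume.restrict (Set.Icc 0 1)
  have : IsProbabilityMeasure μ := ⟨by simp [μ]⟩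
  have hint : ∀ i, Integrable (fun x => f x i) μ := fun i => by
    apply ContinuousOn.integrableOn_compact isCompact_Icc
    fun_prop
  have hmem : (∫ x, f x ∂μ) ∈ convexHull ℝ (f '' Set.Icc 0 1) := by
    apply (convex_convexHull ℝ _).integral_mem (aux_isCompact_hull _ f hf).isClosed
    · filter_upwards [ae_restrict_mem measurableSet_Icc] with x hx
      exact subset_convexHull ℝ _ ⟨x, hx, rfl⟩
    · exact Integrable.of_eval hint
  obtain ⟨ι, _, q, z, hq, hq1, hz, hs⟩ := mem_convexHull_iff_exists_fintype.1 hmem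
  choose t ht htz using hz
  refine ⟨ι, inferInstance, q, t, hq, ht, fun p hp => ?_⟩
  have h1 := congrFun hs ⟨p, by omega⟩
  rw [eval_integral hint] at h1
  simp only [Finset.sum_apply, Pi.smul_apply, ← htz, f, smul_eq_mul, μ] at h1
  rw [h1, integral_Icc_eq_integral_Ioc, ← intervalIntegral.integral_of_le zero_le_one, integral_pow]
  simp

lemma aux_bernstein (N : ℕ) {ι : Type} [Fintype ι] (q t : ι → ℝ)
    (h : ∀ p : ℕ, p ≤ N → ∑ i, q i * t i ^ p = 1 / (p + 1 : ℝ)) (r : ℕ) :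
    ∀ p : ℕ, p + r ≤ N → ∑ i, q i * (t i ^ p * (1 - t i) ^ r) =
      (p.factorial * r.factorial : ℝ) / ((p + r + 1).factorial : ℝ) := by
  induction r with
  | zero =>
    intro p hp
    simp only [pow_zero, mul_one, h p hp, add_zero, Nat.factorial_succ, Nat.factorial_zero]
    have : (p.factorial : ℝ) ≠ 0 := by positivity
    push_cast
    field_simp
  | succ r ih =>
    intro p hp
    have e : ∀ i, q i * (t i ^ p * (1 - t i) ^ (r+1)) =
      q i * (t i ^ p * (1 - t i) ^ r) - q i * (t i ^ (p+1) * (1 - t i) ^ r) := fun i => by ring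
    simp only [e, Finset.sum_sub_distrib]
    rw [ih p (by omega), ih (p+1) (by omega)]
    rw [show p + 1 + r + 1 = (p + r + 1) + 1 by ring, show p + (r + 1) + 1 = (p + r + 1) + 1 by ring]
    simp only [Nat.factorial_succ (p + r + 1), Nat.factorial_succ p, Nat.factorial_succ r]
    have : ((p + r + 1).factorial : ℝ) ≠ 0 := by positivity
    push_cast
    field_simp
    ring

lemma aux_phase (N : ℕ) (hN : N ≠ 0) : ∃ ζ : Fin N → ℂ, (∀ s, ζ s * star (ζ s) = 1) ∧
    ∀ j k : ℕ, j < N → k < N → ∑ s, ζ s ^ j * star (ζ s) ^ k = if j = k then (N : ℂ) else 0 := by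
  obtain ⟨ω, hω⟩ : ∃ ω : ℂ, IsPrimitiveRoot ω N := ⟨_, Complex.isPrimitiveRoot_exp N hN⟩
  have h0 : ω ≠ 0 := hω.ne_zero hN
  have hn : ‖ω‖ = 1 := hω.norm'_eq_one hN
  have hst : ω * star ω = 1 := by
    have := Complex.mul_conj ω
    rw [Complex.normSq_eq_norm_sq, hn] at this
    simpa using this
  refine ⟨fun s => ω ^ (s : ℕ), fun s => ?_, fun j k hj hk => ?_⟩
  · rw [star_pow, ← mul_pow, hst, one_pow]
  · have e : ∀ s : Fin N, (ω ^ (s:ℕ)) ^ j * star (ω ^ (s:ℕ)) ^ k = (ω ^ j * star ω ^ k) ^ (s : ℕ) := by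
      intro s; rw [star_pow]; ring
    simp only [e]
    rw [Fin.sum_univ_eq_sum_range (fun s => (ω ^ j * star ω ^ k) ^ s)]
    split_ifs with h
    · subst h
      simp only [← mul_pow, hst]; simp
    · have hz : ω ^ j * star ω ^ k ≠ 1 := by
        intro hz
        apply h
        apply hω.pow_inj hj hk
        calc ω ^ j = (ω ^ j * star ω ^ k) * ω ^ k := by
              rw [mul_assoc, ← mul_pow, mul_comm (star ω), hst]; simp
          _ = ω ^ k := by rw [hz, one_mul]
      have hzN : (ω ^ j * star ω ^ k) ^ N = 1 := by
        rw [mul_pow, ← pow_mul, ← pow_mul, mul_comm j, mul_comm k, pow_mul, pow_mul, ← star_pow,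
          hω.pow_eq_one]; simp
      rw [geom_sum_eq hz, hzN]; simp

lemma aux_real (n : ℕ) : ∃ (ι : Type) (_ : Fintype ι) (a b : ι → ℝ)
    (c : ι → ℕ → ℝ), (∀ i, a i ^ 2 + b i ^ 2 = 1) ∧
    (∀ k, k ≤ n → ∑ i, c i k * c i k * (n + 2) = 1) ∧
    (∀ k, k ≤ n → ∑ i, (2 * b i ^ 2 - 1) * (c i k * c i k) * (n + 2) =
      ((k:ℝ) - spinVal n) / (spinVal n + 1)) ∧
    (∀ k, k + 1 ≤ n → ∑ i, 2 * a i * b i * (c i (k + 1) * c i k) * (n + 2) =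
      √ (spinVal n * (spinVal n + 1)
      - ((k : ℝ) - spinVal n) * (((k : ℝ) - spinVal n) + 1)) / (spinVal n + 1)) := by
  obtain ⟨ι, _, q, t, hq, ht, hm⟩ := aux_moments (n + 1)
  have hB := aux_bernstein (n + 1) q t hm
  have ha : ∀ i, √(1 - t i) ^ 2 = 1 - t i := fun i => Real.sq_sqrt (by linarith [(ht i).2])
  have hb : ∀ i, √(t i) ^ 2 = t i := fun i => Real.sq_sqrt (ht i).1
  have hqq : ∀ i, √(q i * ((n + 1) / (n + 2))) ^ 2 = q i * ((n + 1) / (n + 2)) := fun i =>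
    Real.sq_sqrt (mul_nonneg (hq i) (by positivity))
  have hn2 : (n + 2 : ℝ) ≠ 0 := by positivity
  have hcc : ∀ i k, (√(q i * ((n + 1) / (n + 2))) * √(n.choose k) * (√(t i) ^ k * √(1 - t i) ^ (n - k))) *
      (√(q i * ((n + 1) / (n + 2))) * √(n.choose k) * (√(t i) ^ k * √(1 - t i) ^ (n - k))) =
      q i * ((n + 1) / (n + 2)) * n.choose k * (t i ^ k * (1 - t i) ^ (n - k)) := by
    intro i k
    have h1 : (√(n.choose k : ℝ)) ^ 2 = n.choose k := Real.sq_sqrt (by positivity)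
    calc _ = (√(q i * ((n + 1) / (n + 2)))) ^ 2 * (√(n.choose k : ℝ)) ^ 2 *
        ((√(t i) ^ 2) ^ k * (√(1 - t i) ^ 2) ^ (n - k)) := by ring
      _ = _ := by rw [hqq, h1, ha, hb]
  have hch : ∀ k, k ≤ n → (n.choose k : ℝ) = n.factorial / (k.factorial * (n - k).factorial) :=
    fun k hk => Nat.cast_choose ℝ hk
  have hB1 : ∀ k, k ≤ n → ∑ i, q i * (t i ^ (k+1) * (1 - t i) ^ (n - k)) * ((n + 1) * n.choose k) =
      (k + 1) / (n + 2) := by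
    intro k hk
    rw [← Finset.sum_mul, hB (n - k) (k + 1) (by omega), hch k hk,
      show k + 1 + (n - k) + 1 = n + 1 + 1 by omega]
    simp only [Nat.factorial_succ]
    have := Nat.factorial_ne_zero n
    have := Nat.factorial_ne_zero k
    have := Nat.factorial_ne_zero (n - k)
    push_cast
    field_simp
    ring
  have hB2 : ∀ k, k ≤ n → ∑ i, q i * (t i ^ k * (1 - t i) ^ (n - k)) * ((n + 1) * n.choose k) =
      1 := by
    intro k hk
    rw [← Finset.sum_mul, hB (n - k) k (by omega), hch k hk,
      show k + (n - k) + 1 = n + 1 by omega]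
    simp only [Nat.factorial_succ]
    have := Nat.factorial_ne_zero n
    have := Nat.factorial_ne_zero k
    have := Nat.factorial_ne_zero (n - k)
    push_cast
    field_simp
  refine ⟨ι, inferInstance, fun i => √(1 - t i), fun i => √(t i),
    fun i k => √(q i * ((n + 1) / (n + 2))) * √(n.choose k) * (√(t i) ^ k * √(1 - t i) ^ (n - k)),
    ?_, ?_, ?_, ?_⟩
  · intro i; rw [ha, hb]; ring
  · intro k hk
    refine Eq.trans (Finset.sum_congr rfl fun i _ => ?_) (hB2 k hk)
    simp only [hcc]
    field_simp
  · intro k hk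
    have e : ((k:ℝ) - spinVal n) / (spinVal n + 1) = 2 * ((k + 1) / (n + 2)) - 1 := by
      unfold spinVal; field_simp; ring
    have e2 := congrArg₂ (fun x y : ℝ => 2 * x - y) (hB1 k hk) (hB2 k hk)
    simp only [Finset.mul_sum, ← Finset.sum_sub_distrib] at e2
    rw [e]
    refine Eq.trans (Finset.sum_congr rfl fun i _ => ?_) e2
    simp only [hcc, hb]
    field_simp
    ring
  · intro k hk
    have hnk : (0:ℝ) < n - k := by
      have : ((k + 1 : ℕ):ℝ) ≤ n := by exact_mod_cast hk
      push_cast at this; linarith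
    have hk1 : (0:ℝ) < k + 1 := by positivity
    have hx : √(n.choose (k+1) : ℝ) * √(n.choose k) = n.choose k * √(((n:ℝ) - k) / (k + 1)) := by
      have h3 : (n.choose (k+1) : ℝ) = n.choose k * (((n:ℝ) - k) / (k + 1)) := by
        have := Nat.choose_succ_right_eq n k
        have h4 : ((n.choose (k+1) * (k+1) : ℕ) : ℝ) = (n.choose k * (n - k) : ℕ) := by rw [this]
        rw [Nat.cast_mul, Nat.cast_mul, Nat.cast_sub (by omega)] at h4
        push_cast at h4
        field_simp
        linarith
      rw [h3, Real.sqrt_mul (by positivity)]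
      have h1 : √(n.choose k : ℝ) * √(n.choose k : ℝ) = n.choose k := Real.mul_self_sqrt (by positivity)
      linear_combination √(((n:ℝ) - k) / (k + 1)) * h1
    have hy : √ (spinVal n * (spinVal n + 1)
      - ((k : ℝ) - spinVal n) * (((k : ℝ) - spinVal n) + 1)) = (k + 1) * √(((n:ℝ) - k) / (k + 1)) := by
      have : spinVal n * (spinVal n + 1) - ((k : ℝ) - spinVal n) * (((k : ℝ) - spinVal n) + 1)
        = (k + 1) ^ 2 * (((n:ℝ) - k) / (k + 1)) := by
        unfold spinVal; field_simp; ring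
      rw [this, Real.sqrt_mul (by positivity), Real.sqrt_sq hk1.le]
    rw [hy]
    have e : (k + 1) * √(((n:ℝ) - k) / (k + 1)) / (spinVal n + 1) =
        (k + 1) / (n + 2) * (2 * √(((n:ℝ) - k) / (k + 1))) := by
      unfold spinVal; field_simp
    rw [e, ← hB1 k (by omega), Finset.sum_mul]
    refine Finset.sum_congr rfl fun i _ => ?_
    obtain ⟨r, hr⟩ : ∃ r, n - k = r + 1 := ⟨n - k - 1, by omega⟩
    beta_reduce
    rw [show n - (k + 1) = r by omega, hr]
    calc _ = (√(q i * ((n + 1) / (n + 2)))) ^ 2 * (√(n.choose (k+1) : ℝ) * √(n.choose k)) *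
        ((√(t i) ^ 2) ^ (k+1) * (√(1 - t i) ^ 2) ^ (r + 1)) * 2 * (n + 2) := by ring
      _ = _ := by
        rw [hqq, hx, ha, hb]
        field_simp

lemma aux_design (n : ℕ) : ∃ (K : Type) (_ : Fintype K) (v : K → Fin (n+1) → ℂ)
    (Ω : K → EuclideanSpace ℝ (Fin 3)), (∀ k, ‖Ω k‖ = 1) ∧
    (∀ a b, ∑ k, v k a * star (v k b) = if a = b then 1 else 0) ∧
    ∀ α a b, ∑ k, (Ω k α : ℂ) * (v k a * star (v k b)) =
      spinMat n α a b / (spinVal n + 1 : ℝ) := by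
  obtain ⟨ι, _, a, b, c, hab, h1, h3, hp⟩ := aux_real n
  obtain ⟨ζ, hζ, hph⟩ := aux_phase (n + 2) (by omega)
  let v : ι × Fin (n+2) → Fin (n+1) → ℂ := fun p k => (c p.1 k : ℂ) * ζ p.2 ^ (k : ℕ)
  let w : ι × Fin (n+2) → ℂ := fun p => ((2 * a p.1 * b p.1 : ℝ) : ℂ) * star (ζ p.2)
  have hS : (spinVal n + 1 : ℝ) ≠ 0 := by unfold spinVal; positivity
  -- diagonal sums
  have hdiag : ∀ (g : ι → ℝ) (x y : Fin (n+1)),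
      ∑ p : ι × Fin (n+2), ((g p.1 : ℝ) : ℂ) * (v p x * star (v p y)) =
      if x = y then ((∑ i, g i * (c i x * c i x) * (n + 2) : ℝ) : ℂ) else 0 := by
    intro g x y
    rw [Fintype.sum_prod_type]
    have : ∀ i, ∑ s, ((g i : ℝ) : ℂ) * (v (i, s) x * star (v (i, s) y)) =
        (g i : ℂ) * (c i x * c i y) * ∑ s, ζ s ^ (x:ℕ) * star (ζ s) ^ (y:ℕ) := by
      intro i
      rw [Finset.mul_sum]
      refine Finset.sum_congr rfl fun s _ => ?_
      simp only [v, star_mul', star_pow, Complex.star_def, Complex.conj_ofReal]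
      ring
    simp only [this]
    simp only [hph x y (by omega) (by omega), Fin.ext_iff]
    split_ifs with h
    · have : x = y := Fin.ext h
      subst this
      push_cast
      rfl
    · simp
  have hplus : ∀ (x y : Fin (n+1)),
      ∑ p : ι × Fin (n+2), w p * (v p x * star (v p y)) = spinP n x y / (spinVal n + 1 : ℝ) := by
    intro x y
    rw [Fintype.sum_prod_type]
    have : ∀ i, ∑ s, w (i, s) * (v (i, s) x * star (v (i, s) y)) =
        ((2 * a i * b i : ℝ) : ℂ) * (c i x * c i y) * ∑ s, ζ s ^ (x:ℕ) * star (ζ s) ^ (y + 1:ℕ) := by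
      intro i
      rw [Finset.mul_sum]
      refine Finset.sum_congr rfl fun s _ => ?_
      simp only [v, w, star_mul', star_pow, Complex.star_def, Complex.conj_ofReal]
      ring
    simp only [this]
    simp only [hph x (y + 1) (by omega) (by omega), spinP]
    split_ifs with h
    · have := hp y (by omega)
      rw [← Complex.ofReal_div, ← this]
      push_cast
      simp only [h]
    · simp
  have hminus : ∀ (x y : Fin (n+1)),
      ∑ p : ι × Fin (n+2), star (w p) * (v p x * star (v p y)) =
        (spinP n)ᴴ x y / (spinVal n + 1 : ℝ) := by
    intro x y
    have := congrArg star (hplus y x)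
    rw [star_sum] at this
    rw [Matrix.conjTranspose_apply]
    have e : star (spinP n y x / ((spinVal n + 1 : ℝ) : ℂ)) =
        star (spinP n y x) / ((spinVal n + 1 : ℝ) : ℂ) := by
      simp only [Complex.star_def, map_div₀, Complex.conj_ofReal]
    rw [← e, ← this]
    refine Finset.sum_congr rfl fun p _ => ?_
    simp only [star_mul', star_star]
    ring
  refine ⟨ι × Fin (n+2), inferInstance, v,
    fun p => !₂[(w p).re, (w p).im, 2 * b p.1 ^ 2 - 1], ?_, ?_, ?_⟩
  · rintro ⟨i, s⟩
    rw [EuclideanSpace.norm_eq, Real.sqrt_eq_one]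
    simp only [Fin.sum_univ_three, Real.norm_eq_abs, sq_abs]
    have hz : (ζ s).re ^ 2 + (ζ s).im ^ 2 = 1 := by
      have := congrArg Complex.re (hζ s)
      simp at this
      linarith
    simp [w]
    linear_combination (4 * a i ^ 2 * b i ^ 2) * hz + 4 * b i ^ 2 * hab i
  · intro x y
    have := hdiag (fun _ => 1) x y
    simp only [Complex.ofReal_one, one_mul] at this
    rw [this, h1 x (by omega)]
    simp
  · intro α x y
    have hre : ∀ p, ((w p).re : ℂ) = (1/2) * (w p + star (w p)) := by
      intro p
      rw [Complex.star_def, Complex.add_conj]; push_cast; ring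
    have him : ∀ p, ((w p).im : ℂ) = (1/(2 * Complex.I)) * (w p - star (w p)) := by
      intro p
      rw [Complex.star_def, Complex.sub_conj]
      have := Complex.I_ne_zero
      push_cast; field_simp
    fin_cases α
    · simp only [spinMat]
      simp [-Complex.star_def, -RCLike.star_def, hre]
      have e1 := hplus x y
      have e2 := hminus x y
      simp only [mul_assoc, ← Finset.mul_sum, add_mul, Finset.sum_add_distrib]
      rw [e1, e2]
      simp; ring
    · simp only [spinMat]
      simp [-Complex.star_def, -RCLike.star_def, him]
      have e1 := hplus x y
      have e2 := hminus x y
      simp only [mul_assoc, ← Finset.mul_sum, sub_mul, Finset.sum_sub_distrib]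
      rw [e1, e2]
      simp; ring
    · have := hdiag (fun i => 2 * b i ^ 2 - 1) x y
      rw [h3 x (by omega)] at this
      simp only [spinMat]
      simp [Matrix.diagonal_apply] at this ⊢
      rw [this]
      split_ifs <;> simp

lemma aux_siteOp_mul {V : Type*} [Fintype V] [DecidableEq V] (n : ℕ) (i j : V) (hij : i ≠ j)
    (A B : Matrix (Fin (n+1)) (Fin (n+1)) ℂ) (x y : V → Fin (n+1)) :
    (siteOp n i A * siteOp n j B) x y =
      ∏ m, (if m = i then A (x m) (y m) else if m = j then B (x m) (y m)
        else if x m = y m then 1 else 0) := by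
  rw [Matrix.mul_apply, Finset.sum_eq_single (Function.update x i (y i))]
  · have h1 : siteOp n i A x (Function.update x i (y i)) = A (x i) (y i) := by
      unfold siteOp
      rw [if_pos]
      · simp
      · intro m hm; simp [hm]
    rw [h1]
    by_cases h : ∀ m, m ≠ i → m ≠ j → x m = y m
    · have h2 : siteOp n j B (Function.update x i (y i)) y = B (x j) (y j) := by
        unfold siteOp
        rw [if_pos]
        · rw [Function.update_of_ne hij.symm]
        · intro m hm
          by_cases hmi : m = i
          · subst hmi; simp
          · rw [Function.update_of_ne hmi]; exact h m hmi hm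
      rw [h2, ← Finset.mul_prod_erase Finset.univ _ (Finset.mem_univ i),
        ← Finset.mul_prod_erase (Finset.univ.erase i) _
          (Finset.mem_erase.2 ⟨hij.symm, Finset.mem_univ j⟩), Finset.prod_eq_one]
      · simp [hij.symm]
      · intro m hm
        simp only [Finset.mem_erase, Finset.mem_univ, and_true] at hm
        simp [hm.1, hm.2, h m hm.2 hm.1]
    · push Not at h
      obtain ⟨m, hmi, hmj, hne⟩ := h
      have h2 : siteOp n j B (Function.update x i (y i)) y = 0 := by
        unfold siteOp
        rw [if_neg]
        intro hh
        have := hh m hmj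
        rw [Function.update_of_ne hmi] at this
        exact hne this
      rw [h2, mul_zero, eq_comm]
      apply Finset.prod_eq_zero (Finset.mem_univ m)
      simp [hmi, hmj, hne]
  · intro z _ hz
    by_contra hne
    have h1 : ∀ m, m ≠ i → x m = z m := by
      by_contra hc
      apply hne; unfold siteOp; rw [if_neg hc, zero_mul]
    have h2 : ∀ m, m ≠ j → z m = y m := by
      by_contra hc
      apply hne; unfold siteOp; rw [if_neg hc, mul_zero]
    apply hz
    funext m
    by_cases hmi : m = i
    · subst hmi; simp [h2 m hij]
    · rw [Function.update_of_ne hmi, h1 m hmi]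
  · simp

section coh
variable {V : Type*} [Fintype V] [DecidableEq V] {n : ℕ} {K : Type} [Fintype K]

lemma aux_prod_sum (v : K → Fin (n+1) → ℂ) (g : V → K → ℂ) (x y : V → Fin (n+1)) :
    ∑ κ : V → K, (∏ m, g m (κ m)) * ((∏ m, v (κ m) (x m)) * star (∏ m, v (κ m) (y m))) =
      ∏ m, ∑ k, g m k * (v k (x m) * star (v k (y m))) := by
  rw [Fintype.prod_sum]
  refine Finset.sum_congr rfl fun κ _ => ?_
  rw [star_prod, ← Finset.prod_mul_distrib, ← Finset.prod_mul_distrib]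

lemma aux_one (v : K → Fin (n+1) → ℂ)
    (h1 : ∀ a b, ∑ k, v k a * star (v k b) = if a = b then 1 else 0)
    (x y : V → Fin (n+1)) :
    ∑ κ : V → K, ((∏ m, v (κ m) (x m)) * star (∏ m, v (κ m) (y m))) =
      (1 : Matrix (V → Fin (n+1)) (V → Fin (n+1)) ℂ) x y := by
  have := aux_prod_sum v (fun _ _ => 1) x y
  simp only [Finset.prod_const_one, one_mul] at this
  rw [this]
  simp only [h1, Matrix.one_apply]
  by_cases h : x = y
  · subst h; simp
  · rw [if_neg h]
    obtain ⟨m, hm⟩ := Function.ne_iff.1 h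
    exact Finset.prod_eq_zero (Finset.mem_univ m) (by simp [hm])

lemma aux_heis (v : K → Fin (n+1) → ℂ) (Ω : K → EuclideanSpace ℝ (Fin 3))
    (h1 : ∀ a b, ∑ k, v k a * star (v k b) = if a = b then 1 else 0)
    (h2 : ∀ α a b, ∑ k, (Ω k α : ℂ) * (v k a * star (v k b)) =
      spinMat n α a b / (spinVal n + 1 : ℝ))
    (i j : V) (hij : i ≠ j) (x y : V → Fin (n+1)) :
    heis n i j x y = ((spinVal n + 1 : ℝ) : ℂ) ^ 2 *
      ∑ κ : V → K, ((⟪Ω (κ i), Ω (κ j)⟫ : ℝ) : ℂ) *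
        ((∏ m, v (κ m) (x m)) * star (∏ m, v (κ m) (y m))) := by
  have hS : ((spinVal n + 1 : ℝ) : ℂ) ≠ 0 := by
    rw [Complex.ofReal_ne_zero]; unfold spinVal; positivity
  have hα : ∀ α, (siteOp n i (spinMat n α) * siteOp n j (spinMat n α)) x y =
      ((spinVal n + 1 : ℝ) : ℂ) ^ 2 * ∑ κ : V → K, ((Ω (κ i) α : ℂ) * (Ω (κ j) α : ℂ)) *
        ((∏ m, v (κ m) (x m)) * star (∏ m, v (κ m) (y m))) := by
    intro α
    have hp := aux_prod_sum v (fun m k => if m = i then (Ω k α : ℂ) else if m = j then (Ω k α : ℂ) else 1) x y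
    have hpr : ∀ κ : V → K, (∏ m, if m = i then (Ω (κ m) α : ℂ) else if m = j then (Ω (κ m) α : ℂ) else 1)
        = (Ω (κ i) α : ℂ) * (Ω (κ j) α : ℂ) := by
      intro κ
      rw [← Finset.mul_prod_erase Finset.univ _ (Finset.mem_univ i),
        ← Finset.mul_prod_erase (Finset.univ.erase i) _
          (Finset.mem_erase.2 ⟨hij.symm, Finset.mem_univ j⟩), Finset.prod_eq_one]
      · simp [hij.symm]
      · intro m hm
        simp only [Finset.mem_erase, Finset.mem_univ, and_true] at hm
        simp [hm.1, hm.2]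
    simp only [hpr] at hp
    rw [hp, aux_siteOp_mul n i j hij]
    have hm : ∀ m, (∑ k, (if m = i then (Ω k α : ℂ) else if m = j then (Ω k α : ℂ) else 1) *
        (v k (x m) * star (v k (y m)))) = (if m = i then spinMat n α (x m) (y m) / (spinVal n + 1 : ℝ)
        else if m = j then spinMat n α (x m) (y m) / (spinVal n + 1 : ℝ)
        else if x m = y m then 1 else 0) := by
      intro m
      split_ifs with a b c
      · rw [h2]
      · rw [h2]
      · simp only [one_mul]; rw [h1, if_pos c]
      · simp only [one_mul]; rw [h1, if_neg c]
    simp only [hm]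
    rw [← Finset.mul_prod_erase Finset.univ _ (Finset.mem_univ i),
        ← Finset.mul_prod_erase (Finset.univ.erase i) _
          (Finset.mem_erase.2 ⟨hij.symm, Finset.mem_univ j⟩)]
    rw [← Finset.mul_prod_erase (Finset.univ) (fun m => (if m = i then spinMat n α (x m) (y m) / (spinVal n + 1 : ℝ)
        else if m = j then spinMat n α (x m) (y m) / (spinVal n + 1 : ℝ)
        else if x m = y m then 1 else 0)) (Finset.mem_univ i),
        ← Finset.mul_prod_erase (Finset.univ.erase i) (fun m => (if m = i then spinMat n α (x m) (y m) / (spinVal n + 1 : ℝ)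
        else if m = j then spinMat n α (x m) (y m) / (spinVal n + 1 : ℝ)
        else if x m = y m then 1 else 0))
          (Finset.mem_erase.2 ⟨hij.symm, Finset.mem_univ j⟩)]
    have hrest : ∀ (f f' : V → ℂ), (∏ m ∈ (Finset.univ.erase i).erase j,
        (if m = i then f m else if m = j then f m else if x m = y m then 1 else 0)) =
        ∏ m ∈ (Finset.univ.erase i).erase j,
        (if m = i then f' m else if m = j then f' m else if x m = y m then 1 else 0) := by
      intro f f'
      refine Finset.prod_congr rfl fun m hm => ?_
      simp only [Finset.mem_erase, Finset.mem_univ, and_true] at hm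
      simp [hm.1, hm.2]
    rw [hrest (fun m => spinMat n α (x m) (y m)) (fun m => spinMat n α (x m) (y m) / (spinVal n + 1 : ℝ))]
    simp only [if_true, hij.symm, if_false]
    field_simp
  unfold heis
  rw [Matrix.sum_apply]
  simp only [hα]
  rw [← Finset.mul_sum, Finset.sum_comm]
  congr 1
  refine Finset.sum_congr rfl fun κ _ => ?_
  rw [← Finset.sum_mul]
  congr 1
  rw [PiLp.inner_apply]
  push_cast
  refine Finset.sum_congr rfl fun α _ => ?_
  simp [mul_comm]

end coh

lemma aux_alpha_nonneg : 0 ≤ alphaBOV := by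
  apply Real.sInf_nonneg
  rintro _ ⟨ρ, ⟨_, h0⟩, rfl⟩
  have hF : 0 ≤ hypF (ρ ^ 2) := by
    unfold hypF
    apply tsum_nonneg
    intro k
    have h1 : ∀ c : ℝ, 0 ≤ c → 0 ≤ ∏ m ∈ Finset.range k, (c + m) := fun c hc =>
      Finset.prod_nonneg fun m _ => by positivity
    have := h1 (1/2) (by norm_num)
    have := h1 (5/2) (by norm_num)
    positivity
  have : Fstar ρ ≤ 0 := by
    unfold Fstar
    have hc : 0 ≤ 8 / (3 * Real.pi) := by positivity
    exact mul_nonpos_of_nonpos_of_nonneg (mul_nonpos_of_nonneg_of_nonpos hc h0.le) hF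
  unfold gBOV
  apply div_nonneg <;> linarith

lemma aux_cut_le {V : Type*} [Fintype V] (w : V → V → ℝ) (hnn : ∀ i j, 0 ≤ w i j)
    (Ω : V → EuclideanSpace ℝ (Fin 3)) (hΩ : ∀ i, ‖Ω i‖ = 1) : cutEnergy w Ω ≤ prodVal w := by
  refine le_csSup ?_ (show cutEnergy w Ω ∈ _ from ⟨Ω, hΩ, rfl⟩)
  refine ⟨(1/4) * ∑ i, ∑ j, w i j * 2, ?_⟩
  rintro _ ⟨Ω', h', rfl⟩
  unfold cutEnergy
  gcongr with i _ j _
  · exact hnn i j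
  · have := neg_le_of_abs_le (abs_real_inner_le_norm (Ω' i) (Ω' j))
    rw [h', h'] at this
    linarith

lemma aux_cut_nonneg {V : Type*} [Fintype V] (w : V → V → ℝ) (hnn : ∀ i j, 0 ≤ w i j)
    (Ω : V → EuclideanSpace ℝ (Fin 3)) (hΩ : ∀ i, ‖Ω i‖ = 1) : 0 ≤ cutEnergy w Ω := by
  unfold cutEnergy
  refine mul_nonneg (by norm_num) (Finset.sum_nonneg fun i _ => Finset.sum_nonneg fun j _ =>
    mul_nonneg (hnn i j) ?_)
  have := le_of_abs_le (abs_real_inner_le_norm (Ω i) (Ω j))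
  rw [hΩ, hΩ] at this
  linarith

lemma aux_qMaxCut_le (n : ℕ) (hn : 1 ≤ n) {V : Type*} [Fintype V] [DecidableEq V]
    (w : V → V → ℝ) (hnn : ∀ i j, 0 ≤ w i j) (hloop : ∀ i, w i i = 0) (hP : 0 ≤ prodVal w) :
    qMaxCut n w ≤ ((spinVal n + 1) / spinVal n) ^ 2 * prodVal w := by
  obtain ⟨K, _, v, Ω, hΩ, h1, h2⟩ := aux_design n
  have hS : 0 < spinVal n := by
    unfold spinVal
    have : (1:ℝ) ≤ n := by exact_mod_cast hn
    positivity
  set L := ((spinVal n + 1) / spinVal n) ^ 2 with hL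
  have hL1 : 1 ≤ L := by
    apply one_le_pow₀
    rw [le_div_iff₀ hS]; linarith
  let E : (V → K) → ℝ := fun κ => (1/4) * ∑ i, ∑ j, w i j * (1 - L * ⟪Ω (κ i), Ω (κ j)⟫)
  have hE : ∀ κ, E κ ≤ L * prodVal w := by
    intro κ
    have h := aux_cut_le w hnn (fun i => Ω (κ i)) (fun i => hΩ _)
    refine le_trans ?_ (mul_le_mul_of_nonneg_left h (by linarith))
    simp only [E, cutEnergy]
    rw [mul_left_comm, Finset.mul_sum]
    simp only [Finset.mul_sum]
    refine Finset.sum_le_sum fun i _ => Finset.sum_le_sum fun j _ => ?_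
    have := mul_nonneg (hnn i j) (sub_nonneg.2 hL1)
    linarith
  have hH : ∀ x y, hQMC n w x y = ∑ κ : V → K, (E κ : ℂ) *
      ((∏ m, v (κ m) (x m)) * star (∏ m, v (κ m) (y m))) := by
    intro x y
    have hterm : ∀ i j, (((w i j : ℝ) : ℂ) • ((1 : Matrix (V → Fin (n+1)) (V → Fin (n+1)) ℂ)
      - ((1/(spinVal n)^2 : ℝ) : ℂ) • heis n i j)) x y = ∑ κ : V → K,
        ((w i j * (1 - L * ⟪Ω (κ i), Ω (κ j)⟫) : ℝ) : ℂ) *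
      ((∏ m, v (κ m) (x m)) * star (∏ m, v (κ m) (y m))) := by
      intro i j
      by_cases hij : i = j
      · subst hij; simp [hloop]
      · simp only [Matrix.smul_apply, Matrix.sub_apply, smul_eq_mul]
        rw [aux_heis v Ω h1 h2 i j hij, ← aux_one v h1 x y, Finset.mul_sum, Finset.mul_sum,
          ← Finset.sum_sub_distrib, Finset.mul_sum]
        refine Finset.sum_congr rfl fun κ _ => ?_
        rw [hL]
        push_cast
        ring
    unfold hQMC
    rw [Matrix.smul_apply, Matrix.sum_apply]
    simp only [Matrix.sum_apply, hterm]
    have : ∀ i, ∑ j, ∑ κ : V → K,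
        ((w i j * (1 - L * ⟪Ω (κ i), Ω (κ j)⟫) : ℝ) : ℂ) *
      ((∏ m, v (κ m) (x m)) * star (∏ m, v (κ m) (y m))) = ∑ κ : V → K, ∑ j,
        ((w i j * (1 - L * ⟪Ω (κ i), Ω (κ j)⟫) : ℝ) : ℂ) *
      ((∏ m, v (κ m) (x m)) * star (∏ m, v (κ m) (y m))) := fun i => Finset.sum_comm
    simp only [this]
    rw [Finset.sum_comm, smul_eq_mul, Finset.mul_sum]
    refine Finset.sum_congr rfl fun κ _ => ?_
    simp only [E, ← Finset.sum_mul]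
    push_cast
    ring
  have hquad : ∀ (g : (V → K) → ℝ) (M : Matrix (V → Fin (n+1)) (V → Fin (n+1)) ℂ),
      (∀ x y, M x y = ∑ κ : V → K, (g κ : ℂ) *
        ((∏ m, v (κ m) (x m)) * star (∏ m, v (κ m) (y m)))) → ∀ ψ : (V → Fin (n+1)) → ℂ,
      star ψ ⬝ᵥ (M *ᵥ ψ) = ((∑ κ : V → K, g κ *
        Complex.normSq (∑ y, star (∏ m, v (κ m) (y m)) * ψ y) : ℝ) : ℂ) := by
    intro g M hM ψ
    have hn : ∀ z : ℂ, ((Complex.normSq z : ℝ) : ℂ) = star z * z := fun z =>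
      Complex.normSq_eq_conj_mul_self
    simp only [Complex.ofReal_sum, Complex.ofReal_mul, hn, star_sum, star_mul', star_star]
    simp only [dotProduct, Matrix.mulVec, hM, Pi.star_apply, Finset.sum_mul, Finset.mul_sum]
    have : ∀ x, ∑ y, ∑ κ : V → K, star (ψ x) * ((g κ : ℂ) * ((∏ m, v (κ m) (x m)) * star (∏ m, v (κ m) (y m))) * ψ y)
       = ∑ κ : V → K, ∑ y, star (ψ x) * ((g κ : ℂ) * ((∏ m, v (κ m) (x m)) * star (∏ m, v (κ m) (y m))) * ψ y) :=
      fun x => Finset.sum_comm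
    simp only [this]
    rw [Finset.sum_comm]
    refine Finset.sum_congr rfl fun κ _ => ?_
    rw [Finset.sum_comm]
    refine Finset.sum_congr rfl fun y _ => ?_
    refine Finset.sum_congr rfl fun x _ => ?_
    ring
  unfold qMaxCut maxEig
  apply Real.sSup_le _ (by positivity)
  rintro r ⟨ψ, hψ, hr⟩
  have e1 := hquad E _ hH ψ
  have e2 := hquad (fun _ => 1) 1 (fun x y => by rw [← aux_one v h1 x y]; simp) ψ
  have hpos : 0 < ∑ x, Complex.normSq (ψ x) := by
    obtain ⟨x, hx⟩ := Function.ne_iff.1 hψ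
    exact Finset.sum_pos' (fun _ _ => Complex.normSq_nonneg _)
      ⟨x, Finset.mem_univ _, Complex.normSq_pos.2 hx⟩
  have e3 : star ψ ⬝ᵥ ψ = ((∑ x, Complex.normSq (ψ x) : ℝ) : ℂ) := by
    simp only [dotProduct, Complex.ofReal_sum, Pi.star_apply]
    exact Finset.sum_congr rfl fun x _ => (Complex.normSq_eq_conj_mul_self).symm
  rw [Matrix.one_mulVec, e3, Complex.ofReal_inj] at e2
  rw [hr, dotProduct_smul, e3, smul_eq_mul, ← Complex.ofReal_mul, Complex.ofReal_inj] at e1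
  have e4 : r * ∑ x, Complex.normSq (ψ x) ≤ (L * prodVal w) * ∑ x, Complex.normSq (ψ x) := by
    rw [e1, e2, Finset.mul_sum]
    refine Finset.sum_le_sum fun κ _ => ?_
    rw [one_mul]
    exact mul_le_mul_of_nonneg_right (hE κ) (Complex.normSq_nonneg _)
  exact le_of_mul_le_mul_right e4 hpos

/-- If unit vectors `Ω_i ∈ S² ⊂ ℝ³` assigned to the vertices achieve an
`α_BOV`-approximation of `Prod(G)`, then their cut energy is at least
`(S/(S+1))² α_BOV · QMaxCut_S(G)`. -/
theorem bov_rounding_approximates_qMaxCut (n : ℕ) (hn : 1 ≤ n)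
    {V : Type*} [Fintype V] [DecidableEq V]
    (w : V → V → ℝ) (hsymm : ∀ i j, w i j = w j i) (hnn : ∀ i j, 0 ≤ w i j)
    (hloop : ∀ i, w i i = 0)
    (Ω : V → EuclideanSpace ℝ (Fin 3)) (hΩ : ∀ i, ‖Ω i‖ = 1)
    (happrox : alphaBOV * prodVal w ≤ cutEnergy w Ω) :
    (spinVal n / (spinVal n + 1)) ^ 2 * alphaBOV * qMaxCut n w ≤ cutEnergy w Ω := by
  have hS : 0 < spinVal n := by
    unfold spinVal
    have : (1:ℝ) ≤ n := by exact_mod_cast hn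
    positivity
  have hP : 0 ≤ prodVal w := (aux_cut_nonneg w hnn Ω hΩ).trans (aux_cut_le w hnn Ω hΩ)
  have h := aux_qMaxCut_le n hn w hnn hloop hP
  refine le_trans ?_ happrox
  have hc : 0 ≤ (spinVal n / (spinVal n + 1)) ^ 2 * alphaBOV :=
    mul_nonneg (by positivity) aux_alpha_nonneg
  refine (mul_le_mul_of_nonneg_left h hc).trans (le_of_eq ?_)
  field_simp

end
end

section
/- For every half-integer S ≥ 1/2, the approximation ratios satisfy the strict inequalities α_L(S) < α_GP(S) < α_BOV, where α_L(S) = (S/(S+1))² α_BOV, α_GP(S) = inf_{ρ∈[−1,0)} f_S(ρ), and α_BOV = inf_{ρ∈[−1,0)} g(ρ). -/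
open Matrix MeasureTheory Filter
open scoped BigOperators RealInnerProductSpace Kronecker

noncomputable section

theorem hypF_coeff (k : ℕ) :
    0 ≤ ((∏ m ∈ Finset.range k, ((1:ℝ)/2 + m)) * (∏ m ∈ Finset.range k, ((1:ℝ)/2 + m))
      / ((∏ m ∈ Finset.range k, ((5:ℝ)/2 + m)) * (Nat.factorial k))) ∧
    ((∏ m ∈ Finset.range k, ((1:ℝ)/2 + m)) * (∏ m ∈ Finset.range k, ((1:ℝ)/2 + m))
      / ((∏ m ∈ Finset.range k, ((5:ℝ)/2 + m)) * (Nat.factorial k))) ≤ 1 := by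
  have h0 : 0 ≤ ∏ m ∈ Finset.range k, ((1:ℝ)/2 + m) :=
    Finset.prod_nonneg fun m _ => by positivity
  have h5 : 0 < ∏ m ∈ Finset.range k, ((5:ℝ)/2 + m) :=
    Finset.prod_pos fun m _ => by positivity
  have h1 : ∏ m ∈ Finset.range k, ((1:ℝ)/2 + m) ≤ ∏ m ∈ Finset.range k, ((5:ℝ)/2 + m) :=
    Finset.prod_le_prod (fun m _ => by positivity) (fun m _ => by linarith)
  have h2 : ∏ m ∈ Finset.range k, ((1:ℝ)/2 + m) ≤ (Nat.factorial k : ℝ) := by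
    rw [← Finset.prod_range_add_one_eq_factorial]
    push_cast
    exact Finset.prod_le_prod (fun m _ => by positivity) (fun m _ => by linarith)
  have hf : (0:ℝ) < (Nat.factorial k : ℝ) := by positivity
  refine ⟨by positivity, ?_⟩
  rw [div_le_one (by positivity)]
  exact mul_le_mul h1 h2 h0 h5.le

theorem hypF_nonneg' (x : ℝ) (hx : 0 ≤ x) : 0 ≤ hypF x :=
  tsum_nonneg fun k => mul_nonneg (hypF_coeff k).1 (pow_nonneg hx k)

theorem hypF_upper : hypF (1/16) ≤ 16/15 := by
  have hg : HasSum (fun k : ℕ => ((1:ℝ)/16) ^ k) (1 - 1/16)⁻¹ :=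
    hasSum_geometric_of_lt_one (by norm_num) (by norm_num)
  have hle : ∀ k : ℕ, ((∏ m ∈ Finset.range k, ((1:ℝ)/2 + m)) *
      (∏ m ∈ Finset.range k, ((1:ℝ)/2 + m))
      / ((∏ m ∈ Finset.range k, ((5:ℝ)/2 + m)) * (Nat.factorial k))) * ((1:ℝ)/16) ^ k
      ≤ ((1:ℝ)/16) ^ k := fun k =>
    mul_le_of_le_one_left (by positivity) (hypF_coeff k).2
  have hs := Summable.of_nonneg_of_le
    (fun k => mul_nonneg (hypF_coeff k).1 (by positivity)) hle hg.summable
  have := hs.tsum_le_tsum hle hg.summable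
  rw [hg.tsum_eq] at this
  unfold hypF
  norm_num at this ⊢
  linarith

theorem Fstar_nonpos (ρ : ℝ) (h : ρ ≤ 0) : Fstar ρ ≤ 0 := by
  unfold Fstar
  have h1 := hypF_nonneg' (ρ ^ 2) (sq_nonneg ρ)
  have h2 : 0 ≤ 8 / (3 * Real.pi) := by positivity
  exact mul_nonpos_of_nonpos_of_nonneg (mul_nonpos_of_nonneg_of_nonpos h2 h) h1

theorem Fstar_quarter : -(1/4) ≤ Fstar (-(1/4)) := by
  unfold Fstar
  have h1 := hypF_upper
  have h0 := hypF_nonneg' (1/16) (by norm_num)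
  have e : (-(1/4):ℝ) ^ 2 = 1/16 := by norm_num
  rw [e]
  have h2 : 8 / (3 * Real.pi) ≤ 8 / 9 := by
    apply div_le_div_of_nonneg_left <;> linarith [Real.pi_gt_three]
  have h3 : 8 / (3 * Real.pi) * hypF (1/16) ≤ 8/9 * (16/15) :=
    mul_le_mul h2 h1 h0 (by norm_num)
  linarith

/-- For every half-integer `S ≥ 1/2`, the approximation ratios satisfy
`α_L(S) < α_GP(S) < α_BOV`, where `α_L(S) = (S/(S+1))² α_BOV`. -/
theorem alphaL_lt_alphaGP_lt_alphaBOV (n : ℕ) (hn : 1 ≤ n) :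
    (spinVal n / (spinVal n + 1)) ^ 2 * alphaBOV < alphaGP (spinVal n)
      ∧ alphaGP (spinVal n) < alphaBOV := by
  have hn' : (1:ℝ) ≤ n := by exact_mod_cast hn
  have hS : 0 < spinVal n := by unfold spinVal; linarith
  generalize spinVal n = S at hS
  obtain ⟨c, hc⟩ : ∃ c, c = (S + 1) / S := ⟨_, rfl⟩
  have hc1 : 1 < c := by rw [hc, lt_div_iff₀ hS]; linarith
  have hcS : S / (S + 1) = 1 / c := by rw [hc, one_div_div]
  have hne : (Set.Ico (-1:ℝ) 0).Nonempty := ⟨-1, by norm_num⟩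
  have hfb : ∀ ρ ∈ Set.Ico (-1:ℝ) 0, 1 / (1 + c) ≤ fS S ρ := by
    rintro ρ ⟨h1, h2⟩
    unfold fS
    rw [← hc]
    have := Fstar_nonpos ρ h2.le
    apply div_le_div₀ <;> nlinarith
  have hgb : ∀ ρ ∈ Set.Ico (-1:ℝ) 0, 1 / (1 - ρ) ≤ gBOV ρ := by
    rintro ρ ⟨h1, h2⟩
    unfold gBOV
    have := Fstar_nonpos ρ h2.le
    apply div_le_div₀ <;> linarith
  have hg2 : ∀ ρ ∈ Set.Ico (-1:ℝ) 0, 1 / 2 ≤ gBOV ρ := by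
    rintro ρ hρ
    refine le_trans ?_ (hgb ρ hρ)
    obtain ⟨h1, h2⟩ := hρ
    apply div_le_div₀ <;> linarith
  have hfg : ∀ ρ ∈ Set.Ico (-1:ℝ) 0, fS S ρ = gBOV ρ * ((1 - ρ) / (1 - c * ρ)) := by
    rintro ρ ⟨h1, h2⟩
    unfold fS gBOV
    rw [← hc]
    have a : 1 - ρ ≠ 0 := by linarith
    have b : 1 - c * ρ ≠ 0 := by nlinarith
    field_simp
  have hGPle : ∀ ρ ∈ Set.Ico (-1:ℝ) 0, alphaGP S ≤ fS S ρ := fun ρ hρ =>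
    csInf_le ⟨1 / (1 + c), by rintro _ ⟨x, hx, rfl⟩; exact hfb x hx⟩ ⟨ρ, hρ, rfl⟩
  have hBle : ∀ ρ ∈ Set.Ico (-1:ℝ) 0, alphaBOV ≤ gBOV ρ := fun ρ hρ =>
    csInf_le ⟨1 / 2, by rintro _ ⟨x, hx, rfl⟩; exact hg2 x hx⟩ ⟨ρ, hρ, rfl⟩
  have hGPge : ∀ b, (∀ ρ ∈ Set.Ico (-1:ℝ) 0, b ≤ fS S ρ) → b ≤ alphaGP S := fun b hb =>
    le_csInf (hne.image _) (by rintro _ ⟨x, hx, rfl⟩; exact hb x hx)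
  have hBge : ∀ b, (∀ ρ ∈ Set.Ico (-1:ℝ) 0, b ≤ gBOV ρ) → b ≤ alphaBOV := fun b hb =>
    le_csInf (hne.image _) (by rintro _ ⟨x, hx, rfl⟩; exact hb x hx)
  have hBpos : 0 < alphaBOV := lt_of_lt_of_le (by norm_num) (hBge (1/2) hg2)
  have hGpos : 0 < alphaGP S := lt_of_lt_of_le (by positivity) (hGPge _ hfb)
  constructor
  · have key : alphaBOV * (2 / (1 + c)) ≤ alphaGP S := by
      apply hGPge
      intro ρ hρ
      rw [hfg ρ hρ]
      have hB := hBle ρ hρ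
      obtain ⟨h1, h2⟩ := hρ
      refine mul_le_mul hB ?_ (by positivity) (by linarith)
      rw [div_le_div_iff₀ (by linarith) (by nlinarith)]
      nlinarith
    refine lt_of_lt_of_le ?_ key
    rw [hcS, mul_comm]
    apply mul_lt_mul_of_pos_left _ hBpos
    rw [div_pow, div_lt_div_iff₀ (by positivity) (by positivity)]
    nlinarith
  · have hlt : alphaGP S < 1 := by
      refine lt_of_le_of_lt (hGPle (-(1/4)) (by norm_num)) ?_
      unfold fS
      rw [← hc, div_lt_one (by linarith)]
      linarith [Fstar_quarter]
    generalize alphaGP S = A at *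
    obtain ⟨ε, hε⟩ : ∃ ε, ε = (1 - A) / 2 := ⟨_, rfl⟩
    have hε0 : 0 < ε := by linarith
    have h1 : A < 1 / (1 + ε) := by
      rw [lt_div_iff₀ (by linarith)]
      nlinarith
    have h2 : A < A * ((1 + c * ε) / (1 + ε)) := by
      apply lt_mul_of_one_lt_right hGpos
      rw [one_lt_div (by linarith)]
      nlinarith
    refine lt_of_lt_of_le (lt_min h1 h2) (hBge _ ?_)
    intro ρ hρ
    by_cases h : -ρ < ε
    · refine le_trans (min_le_left _ _) (le_trans ?_ (hgb ρ hρ))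
      obtain ⟨h3, h4⟩ := hρ
      apply div_le_div₀ <;> linarith
    · refine le_trans (min_le_right _ _) ?_
      have hA := hGPle ρ hρ
      rw [hfg ρ hρ] at hA
      obtain ⟨h3, h4⟩ := hρ
      have hd : 0 < 1 - c * ρ := by nlinarith
      have hd' : 0 < 1 - ρ := by linarith
      have hA' : A * ((1 - c * ρ) / (1 - ρ)) ≤ gBOV ρ := by
        rw [← mul_div_assoc, le_div_iff₀ hd] at hA
        rw [← mul_div_assoc, div_le_iff₀ hd']
        exact hA
      refine le_trans (mul_le_mul_of_nonneg_left ?_ hGpos.le) hA'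
      rw [div_le_div_iff₀ (by linarith) hd']
      nlinarith

end
end
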